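/- arXiv:1910.09485 — 9 statements merged into one kernel-verified Lean document; each statement's English description precedes it below -/
import Mathlib

section
/- Let X be a measurable space, let μ be a probability measure on X × X, and let μ* be the pushforward of μ under the swap map (x,y) ↦ (y,x). Assume μ and μ* are mutually absolutely continuous, and define the log Metropolis–Hastings ratio ρ(x,y) = log((dμ*/dμ)(x,y)). Then for every measurable function f : ℝ → ℝ such that ∫ |f(ρ(x,y))| dμ(x,y) < ∞, one has ∫ f(−ρ(x,y)) e^{ρ(x,y)} dμ(x,y) = ∫ f(ρ(x,y)) dμ(x,y). -/
open MeasureTheory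

/-! Write `ν = μ.map T` for a measurable involution `T` and `ρ = log (dν/dμ)`. Since `T` exchanges
`μ` and `ν`, it inverts the density `dν/dμ`, so that `ρ ∘ T = -ρ` almost everywhere. Hence
`∫ e^ρ • f(-ρ) dμ = ∫ e^ρ • (f ∘ ρ ∘ T) dμ = ∫ f ∘ ρ ∘ T dν = ∫ f ∘ ρ dμ`. -/

section LogLikelihoodRatio

variable {α β E : Type*} [MeasurableSpace α] [MeasurableSpace β] [NormedAddCommGroup E]
  [NormedSpace ℝ E] {μ ν : Measure α} [SigmaFinite μ] [SigmaFinite ν]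

theorem llr_map_comp_ae_eq {φ : α → β} (hφ : MeasurableEmbedding φ) (μ ν : Measure α)
    [SigmaFinite μ] [SigmaFinite ν] :
    llr (μ.map φ) (ν.map φ) ∘ φ =ᵐ[ν] llr μ ν := by
  filter_upwards [hφ.rnDeriv_map μ ν] with x hx
  rw [Function.comp_apply, llr, llr, hx]

theorem exp_llr_smul_ae_eq_rnDeriv_smul (hνμ : ν ≪ μ) (g : α → E) :
    (fun x ↦ Real.exp (llr μ ν x) • g x) =ᵐ[ν] fun x ↦ (μ.rnDeriv ν x).toReal • g x :=
  (exp_llr_of_ac' μ ν hνμ).smul .rfl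

theorem integrable_exp_llr_smul_iff (hμν : μ ≪ ν) (hνμ : ν ≪ μ) {g : α → E} :
    Integrable (fun x ↦ Real.exp (llr μ ν x) • g x) ν ↔ Integrable g μ :=
  (integrable_congr (exp_llr_smul_ae_eq_rnDeriv_smul hνμ g)).trans
    (integrable_rnDeriv_smul_iff hμν)

theorem integral_exp_llr_smul (hμν : μ ≪ ν) (hνμ : ν ≪ μ) (g : α → E) :
    ∫ x, Real.exp (llr μ ν x) • g x ∂ν = ∫ x, g x ∂μ :=
  (integral_congr_ae (exp_llr_smul_ae_eq_rnDeriv_smul hνμ g)).trans (integral_rnDeriv_smul hμν)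

end LogLikelihoodRatio

section Involution

variable {α E : Type*} [MeasurableSpace α] [NormedAddCommGroup E] [NormedSpace ℝ E]
  {μ : Measure α} {T : α → α}

theorem measurableEmbedding_of_involutive (hT : Measurable T) (hinv : T.Involutive) :
    MeasurableEmbedding T :=
  (MeasurableEquiv.ofInvolutive T hinv hT).measurableEmbedding

theorem map_map_of_involutive (hT : Measurable T) (hinv : T.Involutive) (μ : Measure α) :
    (μ.map T).map T = μ := by
  rw [Measure.map_map hT hT, hinv.comp_self, Measure.map_id]

theorem map_absolutelyContinuous_of_involutive (hT : Measurable T) (hinv : T.Involutive)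
    (hμ : μ ≪ μ.map T) : μ.map T ≪ μ := by
  simpa only [map_map_of_involutive hT hinv] using hμ.map hT

variable [SigmaFinite μ]

theorem llr_map_comp_ae_eq_neg_of_involutive (hT : Measurable T) (hinv : T.Involutive)
    (hμ : μ ≪ μ.map T) :
    llr (μ.map T) μ ∘ T =ᵐ[μ] -llr (μ.map T) μ := by
  have hemb := measurableEmbedding_of_involutive hT hinv
  have : SigmaFinite (μ.map T) := hemb.sigmaFinite_map
  have hswap : llr (μ.map T) μ ∘ T =ᵐ[μ.map T] llr μ (μ.map T) := by
    simpa only [map_map_of_involutive hT hinv] using llr_map_comp_ae_eq hemb μ (μ.map T)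
  have hneg : llr μ (μ.map T) =ᵐ[μ] -llr (μ.map T) μ := by
    simpa only [neg_neg] using (neg_llr hμ).neg
  exact (hμ.ae_eq hswap).trans hneg

theorem integrable_exp_llr_map_smul_comp_iff (hT : Measurable T) (hinv : T.Involutive)
    (hμ : μ ≪ μ.map T) {g : α → E} :
    Integrable (fun x ↦ Real.exp (llr (μ.map T) μ x) • g (T x)) μ ↔ Integrable g μ := by
  have hemb := measurableEmbedding_of_involutive hT hinv
  have : SigmaFinite (μ.map T) := hemb.sigmaFinite_map
  rw [integrable_exp_llr_smul_iff (map_absolutelyContinuous_of_involutive hT hinv hμ) hμ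
      (g := fun x ↦ g (T x)), hemb.integrable_map_iff]
  simp only [Function.comp_def, hinv _]

theorem integral_exp_llr_map_smul_comp (hT : Measurable T) (hinv : T.Involutive)
    (hμ : μ ≪ μ.map T) (g : α → E) :
    ∫ x, Real.exp (llr (μ.map T) μ x) • g (T x) ∂μ = ∫ x, g x ∂μ := by
  have hemb := measurableEmbedding_of_involutive hT hinv
  have : SigmaFinite (μ.map T) := hemb.sigmaFinite_map
  calc ∫ x, Real.exp (llr (μ.map T) μ x) • g (T x) ∂μ
      = ∫ x, g (T x) ∂μ.map T :=
        integral_exp_llr_smul (map_absolutelyContinuous_of_involutive hT hinv hμ) hμ _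
    _ = ∫ x, g (T (T x)) ∂μ := hemb.integral_map _
    _ = ∫ x, g x ∂μ := by simp only [hinv _]

theorem stmt1_general (hT : Measurable T) (hinv : T.Involutive) (hμ : μ ≪ μ.map T) (f : ℝ → E)
    (hf : Integrable (fun x ↦ f (llr (μ.map T) μ x)) μ) :
    Integrable (fun x ↦ Real.exp (llr (μ.map T) μ x) • f (-llr (μ.map T) μ x)) μ ∧
      ∫ x, Real.exp (llr (μ.map T) μ x) • f (-llr (μ.map T) μ x) ∂μ
        = ∫ x, f (llr (μ.map T) μ x) ∂μ := by
  have hcomp : (fun x ↦ Real.exp (llr (μ.map T) μ x) • f (llr (μ.map T) μ (T x))) =ᵐ[μ]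
      fun x ↦ Real.exp (llr (μ.map T) μ x) • f (-llr (μ.map T) μ x) :=
    .smul .rfl ((llr_map_comp_ae_eq_neg_of_involutive hT hinv hμ).fun_comp f)
  exact ⟨((integrable_exp_llr_map_smul_comp_iff hT hinv hμ).2 hf).congr hcomp,
    (integral_congr_ae hcomp).symm.trans
      (integral_exp_llr_map_smul_comp hT hinv hμ fun x ↦ f (llr (μ.map T) μ x))⟩

end Involution

/-- De-exponentiation identity for the log Metropolis–Hastings ratio: if `μ` is a probability
measure on `X × X` that is mutually absolutely continuous with its pushforward `μ*` under the
swap map, `ρ p = log ((dμ*/dμ) p)`, and `f : ℝ → ℝ` is measurable with `f ∘ ρ` integrable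
with respect to `μ`, then `∫ f(-ρ) e^ρ dμ = ∫ f(ρ) dμ`. -/
theorem stmt1 {X : Type*} [MeasurableSpace X] (μ : Measure (X × X)) [IsProbabilityMeasure μ]
    (h₁ : μ ≪ Measure.map Prod.swap μ) (h₂ : Measure.map Prod.swap μ ≪ μ)
    (f : ℝ → ℝ) (hf : Measurable f)
    (hint : Integrable
      (fun p => f (Real.log (((Measure.map Prod.swap μ).rnDeriv μ p).toReal))) μ) :
    ∫ p, f (- Real.log (((Measure.map Prod.swap μ).rnDeriv μ p).toReal)) *
          Real.exp (Real.log (((Measure.map Prod.swap μ).rnDeriv μ p).toReal)) ∂μ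
      = ∫ p, f (Real.log (((Measure.map Prod.swap μ).rnDeriv μ p).toReal)) ∂μ := by
  simpa only [smul_eq_mul, mul_comm, llr] using
    (stmt1_general measurable_swap Prod.swap_swap h₁ f hint).2
end

section
/- Let ρ be a real random variable on a probability space satisfying the log-Metropolis–Hastings-ratio symmetry, and suppose E[ρ²] < ∞. Then E[ρ] + (1/2)·E[ρ²] = E[ρ² · ∫₀^{1/2} (1 − e^{tρ}) dt]. -/
open MeasureTheory

/-- A real random variable `ρ` on a probability space satisfies the
log-Metropolis–Hastings-ratio symmetry if for every measurable `f : ℝ → ℝ` with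
`E[|f(ρ)|] < ∞` one has `E[f(-ρ) e^ρ] = E[f(ρ)]`. -/
def LMHRSymmetric {Ω : Type*} [MeasurableSpace Ω] (P : Measure Ω) (ρ : Ω → ℝ) : Prop :=
  ∀ f : ℝ → ℝ, Measurable f → Integrable (fun ω => f (ρ ω)) P →
    ∫ ω, f (-ρ ω) * Real.exp (ρ ω) ∂P = ∫ ω, f (ρ ω) ∂P

/-!
Applied to `f x * e ^ (x / 2)` with `f` odd, the symmetry gives
`E[f(ρ) e^(ρ/2)] = -E[f(ρ) e^(ρ/2)] = 0`: reweighted by `e^(ρ/2)`, the law of `ρ` is symmetric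
about `0`. Evaluating the inner integral gives
`ρ² ∫₀^{1/2} (1 - e^{tρ}) dt = ρ + ρ² / 2 - ρ e^(ρ/2)`, whose last term has zero mean.
-/

section

variable {Ω : Type*} [MeasurableSpace Ω] {P : Measure Ω} {ρ : Ω → ℝ} {f : ℝ → ℝ}

theorem sq_mul_integral_one_sub_exp_mul (a x : ℝ) :
    x ^ 2 * ∫ t in (0 : ℝ)..a, (1 - Real.exp (t * x))
      = x + a * x ^ 2 - x * Real.exp (a * x) := by
  have hexp : x * ∫ t in (0 : ℝ)..a, Real.exp (t * x) = Real.exp (a * x) - 1 := by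
    rw [intervalIntegral.mul_integral_comp_mul_right, integral_exp, zero_mul, Real.exp_zero]
  have hsub : ∫ t in (0 : ℝ)..a, (1 - Real.exp (t * x))
      = a - ∫ t in (0 : ℝ)..a, Real.exp (t * x) := by
    rw [intervalIntegral.integral_sub intervalIntegrable_const
      (Continuous.intervalIntegrable (by fun_prop) _ _), integral_one, sub_zero]
  rw [hsub]
  linear_combination -x * hexp

theorem integrable_mul_exp_mul_of_le_of_le {g X : Ω → ℝ} {s t u : ℝ} (hX : AEMeasurable X P)
    (hs : Integrable (fun ω => g ω * Real.exp (s * X ω)) P)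
    (hu : Integrable (fun ω => g ω * Real.exp (u * X ω)) P) (hst : s ≤ t) (htu : t ≤ u) :
    Integrable (fun ω => g ω * Real.exp (t * X ω)) P := by
  have hmeas : AEStronglyMeasurable (fun ω => g ω * Real.exp (t * X ω)) P := by
    have hmul : AEStronglyMeasurable
        (fun ω => g ω * Real.exp (s * X ω) * Real.exp ((t - s) * X ω)) P :=
      hs.1.mul (hX.const_mul (t - s)).exp.aestronglyMeasurable
    refine hmul.congr (.of_forall fun ω => ?_)
    simp only [mul_assoc, ← Real.exp_add]
    ring_nf
  have hexp (x : ℝ) : Real.exp (t * x) ≤ Real.exp (s * x) + Real.exp (u * x) := by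
    rcases le_total 0 x with hx | hx
    · have : Real.exp (t * x) ≤ Real.exp (u * x) := by gcongr
      linarith [Real.exp_pos (s * x)]
    · have : Real.exp (t * x) ≤ Real.exp (s * x) :=
        Real.exp_le_exp.2 (mul_le_mul_of_nonpos_right hst hx)
      linarith [Real.exp_pos (u * x)]
  refine (hs.norm.add hu.norm).mono' hmeas (.of_forall fun ω => ?_)
  simp only [Pi.add_apply, norm_mul, Real.norm_eq_abs, Real.abs_exp, ← mul_add]
  exact mul_le_mul_of_nonneg_left (hexp (X ω)) (abs_nonneg (g ω))

namespace LMHRSymmetric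

theorem integrable_mul_exp (hsymm : LMHRSymmetric P ρ) (hρ : AEMeasurable ρ P)
    (hf : Measurable f) (heven : Function.Even fun x => |f x|)
    (hint : Integrable (fun ω => f (ρ ω)) P) :
    Integrable (fun ω => f (ρ ω) * Real.exp (ρ ω)) P := by
  have hmeas : AEStronglyMeasurable (fun ω => f (ρ ω) * Real.exp (ρ ω)) P :=
    hint.1.mul hρ.exp.aestronglyMeasurable
  -- If the left side of the symmetry for `|f|` is undefined, it is `0`, so `f(ρ) = 0` a.e.
  by_contra hnot
  have hundef : ∫ ω, |f (ρ ω)| * Real.exp (ρ ω) ∂P = 0 :=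
    integral_undef fun h => hnot <| (integrable_norm_iff hmeas).1 <| by
      simpa only [norm_mul, Real.norm_eq_abs, Real.abs_exp] using h
  have hzero : ∫ ω, |f (ρ ω)| ∂P = 0 := by
    rw [← hsymm (fun x => |f x|) (by fun_prop) hint.abs, ← hundef]
    exact integral_congr_ae (.of_forall fun ω =>
      congrArg (· * Real.exp (ρ ω)) (heven (ρ ω)))
  have hae : ∀ᵐ ω ∂P, |f (ρ ω)| = 0 :=
    (integral_eq_zero_iff_of_nonneg (fun ω => abs_nonneg (f (ρ ω))) hint.abs).1 hzero
  refine hnot ((integrable_zero Ω ℝ P).congr ?_)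
  filter_upwards [hae] with ω hω
  rw [abs_eq_zero.1 hω, zero_mul, Pi.zero_apply]

theorem integrable_mul_exp_half (hsymm : LMHRSymmetric P ρ) (hρ : AEMeasurable ρ P)
    (hf : Measurable f) (heven : Function.Even fun x => |f x|)
    (hint : Integrable (fun ω => f (ρ ω)) P) :
    Integrable (fun ω => f (ρ ω) * Real.exp (1 / 2 * ρ ω)) P :=
  integrable_mul_exp_mul_of_le_of_le (s := 0) (u := 1) hρ
    (by simpa only [zero_mul, Real.exp_zero, mul_one] using hint)
    (by simpa only [one_mul] using hsymm.integrable_mul_exp hρ hf heven hint)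
    (by norm_num) (by norm_num)

theorem integral_mul_exp_half_eq_zero (hsymm : LMHRSymmetric P ρ) (hρ : AEMeasurable ρ P)
    (hf : Measurable f) (hodd : f.Odd) (hint : Integrable (fun ω => f (ρ ω)) P) :
    ∫ ω, f (ρ ω) * Real.exp (1 / 2 * ρ ω) ∂P = 0 := by
  have heven : Function.Even fun x => |f x| := fun x => by simp only [hodd x, abs_neg]
  have hreflect (x : ℝ) : f (-x) * Real.exp (1 / 2 * -x) * Real.exp x
      = -(f x * Real.exp (1 / 2 * x)) := by
    rw [hodd, mul_assoc, ← Real.exp_add]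
    ring_nf
  have hneg := hsymm (fun x => f x * Real.exp (1 / 2 * x)) (by fun_prop)
    (hsymm.integrable_mul_exp_half hρ hf heven hint)
  simp only [hreflect, integral_neg] at hneg
  exact self_eq_neg.1 hneg.symm

end LMHRSymmetric

theorem stmt2_general (hsymm : LMHRSymmetric P ρ) (h1 : Integrable ρ P)
    (h2 : Integrable (fun ω => (ρ ω) ^ 2) P) :
    (∫ ω, ρ ω ∂P) + (1 / 2) * ∫ ω, (ρ ω) ^ 2 ∂P
      = ∫ ω, (ρ ω) ^ 2 * (∫ t in (0 : ℝ)..(1 / 2), (1 - Real.exp (t * ρ ω))) ∂P := by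
  have hρ : AEMeasurable ρ P := h1.aemeasurable
  have hodd : Function.Odd (id : ℝ → ℝ) := fun _ => rfl
  have hhalf : Integrable (fun ω => ρ ω * Real.exp (1 / 2 * ρ ω)) P :=
    hsymm.integrable_mul_exp_half hρ measurable_id abs_neg h1
  have hmean : ∫ ω, ρ ω * Real.exp (1 / 2 * ρ ω) ∂P = 0 :=
    hsymm.integral_mul_exp_half_eq_zero hρ measurable_id hodd h1
  have hquad : Integrable (fun ω => 1 / 2 * ρ ω ^ 2) P := h2.const_mul _
  have hsum : Integrable (fun ω => ρ ω + 1 / 2 * ρ ω ^ 2) P := h1.add hquad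
  simp only [sq_mul_integral_one_sub_exp_mul]
  rw [integral_sub hsum hhalf, hmean, sub_zero, integral_add h1 hquad,
    integral_const_mul]

end

/-- If `ρ` satisfies the log-Metropolis–Hastings-ratio symmetry and `E[ρ²] < ∞`, then
`E[ρ] + (1/2) E[ρ²] = E[ρ² ∫₀^{1/2} (1 - e^{tρ}) dt]`. -/
theorem stmt2 {Ω : Type*} [MeasurableSpace Ω] (P : Measure Ω) [IsProbabilityMeasure P]
    (ρ : Ω → ℝ) (hρ : Measurable ρ) (hsymm : LMHRSymmetric P ρ)
    (h2 : Integrable (fun ω => (ρ ω) ^ 2) P) :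
    (∫ ω, ρ ω ∂P) + (1 / 2) * ∫ ω, (ρ ω) ^ 2 ∂P
      = ∫ ω, (ρ ω) ^ 2 * (∫ t in (0 : ℝ)..(1 / 2), (1 - Real.exp (t * ρ ω))) ∂P := by
  have hL2 : MemLp ρ 2 P := (memLp_two_iff_integrable_sq hρ.aestronglyMeasurable).2 h2
  exact stmt2_general hsymm (hL2.integrable one_le_two) h2
end

section
/- Let ρ be a real random variable on a probability space satisfying the log-Metropolis–Hastings-ratio symmetry, and suppose E[ρ²] < ∞. Then for every κ > 0, |E[ρ² · ∫₀^{1/2} (1 − e^{tρ}) dt]| ≤ sinh(κ/2)·E[ρ²] + E[ρ² · 1{ρ < −κ}]. -/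
open MeasureTheory

/-! Since `|1 - e^y| ≤ 2 sinh |y|`, the inner integral is at most `sinh (κ / 2)` in absolute value
when `|ρ| ≤ κ`. It is at most `1 / 2` when `ρ < -κ`, and at most `e^ρ / 2` when `ρ > κ`. As `ρ²` is
even, the symmetry turns `E[ρ² e^ρ 1{ρ > κ}]` into `E[ρ² 1{ρ < -κ}]`, so each tail contributes half
of the latter. -/

lemma abs_one_sub_exp_le_two_mul_sinh_abs (x : ℝ) :
    |1 - Real.exp x| ≤ 2 * Real.sinh |x| := by
  rw [Real.sinh_eq, mul_div_cancel₀ _ two_ne_zero]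
  rcases le_total 0 x with hx | hx
  · have h_one_le : 1 ≤ Real.exp x := Real.one_le_exp hx
    have h_neg_le : Real.exp (-x) ≤ 1 := Real.exp_le_one_iff.2 (neg_nonpos.2 hx)
    rw [abs_of_nonneg hx, abs_of_nonpos (by linarith)]
    linarith
  · have h_le_one : Real.exp x ≤ 1 := Real.exp_le_one_iff.2 hx
    have h_le_neg : 1 ≤ Real.exp (-x) := Real.one_le_exp (neg_nonneg.2 hx)
    rw [abs_of_nonpos hx, neg_neg, abs_of_nonneg (by linarith)]
    linarith

lemma abs_one_sub_exp_le_one {x : ℝ} (hx : x ≤ 0) : |1 - Real.exp x| ≤ 1 := by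
  rw [abs_of_nonneg (sub_nonneg.2 (Real.exp_le_one_iff.2 hx))]
  exact sub_le_self 1 (Real.exp_pos x).le

lemma abs_one_sub_exp_le_exp {x : ℝ} (hx : 0 ≤ x) : |1 - Real.exp x| ≤ Real.exp x := by
  rw [abs_sub_comm, abs_of_nonneg (sub_nonneg.2 (Real.one_le_exp hx))]
  exact sub_le_self _ zero_le_one

lemma abs_one_sub_exp_mul_le {s t κ : ℝ} (ht : 0 ≤ t) (hts : t ≤ s) (hs : s ≤ 1) (hκ : 0 ≤ κ)
    (x : ℝ) :
    |1 - Real.exp (t * x)| ≤ 2 * Real.sinh (s * κ) + (Set.Iio (-κ)).indicator 1 x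
      + (Set.Ioi κ).indicator Real.exp x := by
  have h_sinh : 0 ≤ Real.sinh (s * κ) := Real.sinh_nonneg_iff.2 (mul_nonneg (ht.trans hts) hκ)
  rcases lt_or_ge x (-κ) with h_left | h_left
  · have h_bound := abs_one_sub_exp_le_one (mul_nonpos_of_nonneg_of_nonpos ht (by linarith : x ≤ 0))
    rw [Set.indicator_of_mem (Set.mem_Iio.2 h_left),
      Set.indicator_of_notMem (Set.notMem_Ioi.2 (by linarith)), Pi.one_apply]
    linarith
  rw [Set.indicator_of_notMem (Set.notMem_Iio.2 h_left)]
  rcases lt_or_ge κ x with h_right | h_right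
  · have hx : 0 ≤ x := hκ.trans h_right.le
    have h_exp : Real.exp (t * x) ≤ Real.exp x :=
      Real.exp_le_exp.2 (mul_le_of_le_one_left hx (hts.trans hs))
    have h_bound := abs_one_sub_exp_le_exp (mul_nonneg ht hx)
    rw [Set.indicator_of_mem (Set.mem_Ioi.2 h_right)]
    linarith
  · rw [Set.indicator_of_notMem (Set.notMem_Ioi.2 h_right), add_zero, add_zero]
    have h_abs : |t * x| ≤ s * κ := by
      rw [abs_mul, abs_of_nonneg ht]
      exact mul_le_mul hts (abs_le.2 ⟨h_left, h_right⟩) (abs_nonneg x) (ht.trans hts)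
    calc |1 - Real.exp (t * x)| ≤ 2 * Real.sinh |t * x| := abs_one_sub_exp_le_two_mul_sinh_abs _
      _ ≤ 2 * Real.sinh (s * κ) := by gcongr; exact Real.sinh_le_sinh.2 h_abs

lemma abs_integral_one_sub_exp_mul_le {s κ : ℝ} (hs₀ : 0 ≤ s) (hs₁ : s ≤ 1) (hκ : 0 ≤ κ) (x : ℝ) :
    |∫ t in (0 : ℝ)..s, (1 - Real.exp (t * x))| ≤
      s * (2 * Real.sinh (s * κ) + (Set.Iio (-κ)).indicator 1 x
        + (Set.Ioi κ).indicator Real.exp x) := by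
  have h_bound := intervalIntegral.norm_integral_le_of_norm_le_const
    (f := fun t => 1 - Real.exp (t * x)) fun t (ht : t ∈ Set.uIoc 0 s) => by
      rw [Set.uIoc_of_le hs₀] at ht
      exact abs_one_sub_exp_mul_le ht.1.le ht.2 hs₁ hκ x
  rwa [sub_zero, abs_of_nonneg hs₀, mul_comm] at h_bound

section Expectation

variable {Ω : Type*} [MeasurableSpace Ω] {P : Measure Ω} {ρ : Ω → ℝ}

lemma abs_integral_mul_integral_one_sub_exp_le {g : Ω → ℝ} (hρ : AEMeasurable ρ P)
    {s κ : ℝ} (hg : Integrable g P)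
    (hg_exp : IntegrableOn (fun ω => |g ω| * Real.exp (ρ ω)) {ω | κ < ρ ω} P)
    (hs₀ : 0 ≤ s) (hs₁ : s ≤ 1) (hκ : 0 ≤ κ) :
    |∫ ω, g ω * (∫ t in (0 : ℝ)..s, (1 - Real.exp (t * ρ ω))) ∂P| ≤
      s * (2 * Real.sinh (s * κ) * (∫ ω, |g ω| ∂P) + (∫ ω in {ω | ρ ω < -κ}, |g ω| ∂P)
        + ∫ ω in {ω | κ < ρ ω}, |g ω| * Real.exp (ρ ω) ∂P) := by
  have h_left : NullMeasurableSet {ω | ρ ω < -κ} P := nullMeasurableSet_lt hρ aemeasurable_const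
  have h_right : NullMeasurableSet {ω | κ < ρ ω} P := nullMeasurableSet_lt aemeasurable_const hρ
  have h_center_int := hg.abs.const_mul (2 * Real.sinh (s * κ))
  have h_left_int := hg.abs.indicator₀ h_left
  have h_right_int := hg_exp.integrable_indicator₀ h_right
  have h_pointwise (ω : Ω) : ‖g ω * ∫ t in (0 : ℝ)..s, (1 - Real.exp (t * ρ ω))‖ ≤
      s * (2 * Real.sinh (s * κ) * |g ω| + {ω | ρ ω < -κ}.indicator (fun ω => |g ω|) ω
        + {ω | κ < ρ ω}.indicator (fun ω => |g ω| * Real.exp (ρ ω)) ω) := by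
    rw [Real.norm_eq_abs, abs_mul]
    refine (mul_le_mul_of_nonneg_left (abs_integral_one_sub_exp_mul_le hs₀ hs₁ hκ (ρ ω))
      (abs_nonneg _)).trans_eq ?_
    simp only [Set.indicator_apply, Set.mem_Iio, Set.mem_Ioi, Set.mem_ofPred_eq, Pi.one_apply]
    split_ifs <;> ring
  refine (norm_integral_le_of_norm_le (((h_center_int.add h_left_int).add h_right_int).const_mul s)
    (ae_of_all P h_pointwise)).trans_eq ?_
  rw [integral_const_mul, integral_add' (h_center_int.add h_left_int) h_right_int,
    integral_add' h_center_int h_left_int, integral_const_mul, integral_indicator₀ h_left,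
    integral_indicator₀ h_right]

namespace LMHRSymmetric

-- The Bochner integral of a non-integrable function is `0`, so if `w(ρ) e^ρ` were not integrable
-- the symmetry would force `E|w(ρ)| = 0`, hence `w(ρ) = 0` almost surely.
lemma integrable_even_mul_exp (hsymm : LMHRSymmetric P ρ) {w : ℝ → ℝ} (hw : Measurable w)
    (hw_even : w.Even) (hw_int : Integrable (fun ω => w (ρ ω)) P) (hρ : AEMeasurable ρ P) :
    Integrable (fun ω => w (ρ ω) * Real.exp (ρ ω)) P := by
  by_contra h_not
  have h_abs_not : ¬ Integrable (fun ω => |w (ρ ω)| * Real.exp (ρ ω)) P := fun h =>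
    h_not <| h.mono ((hw.comp_aemeasurable hρ).mul hρ.exp).aestronglyMeasurable <|
      ae_of_all _ fun ω => by simp
  have h_zero : ∫ ω, |w (ρ ω)| ∂P = 0 := by
    rw [← hsymm (fun x => |w x|) hw.abs hw_int.abs]
    simpa only [hw_even _] using integral_undef h_abs_not
  have h_ae_zero : (fun ω => |w (ρ ω)|) =ᵐ[P] 0 :=
    (integral_eq_zero_iff_of_nonneg (fun _ => abs_nonneg _) hw_int.abs).1 h_zero
  refine h_not ((integrable_zero Ω ℝ P).congr ?_)
  filter_upwards [h_ae_zero] with ω hω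
  rw [abs_eq_zero.1 hω, Pi.zero_apply, zero_mul]

lemma setIntegral_preimage_neg (hsymm : LMHRSymmetric P ρ) {f : ℝ → ℝ} (hf : Measurable f)
    (hf_int : Integrable (fun ω => f (ρ ω)) P) (hρ : AEMeasurable ρ P) {A : Set ℝ}
    (hA : MeasurableSet A) :
    ∫ ω in {ω | -ρ ω ∈ A}, f (-ρ ω) * Real.exp (ρ ω) ∂P = ∫ ω in {ω | ρ ω ∈ A}, f (ρ ω) ∂P := by
  have h_meas : NullMeasurableSet {ω | ρ ω ∈ A} P := hρ.nullMeasurableSet_preimage hA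
  have h_meas_neg : NullMeasurableSet {ω | -ρ ω ∈ A} P := hρ.neg.nullMeasurableSet_preimage hA
  have h_comp : (fun ω => A.indicator f (ρ ω)) = {ω | ρ ω ∈ A}.indicator fun ω => f (ρ ω) := rfl
  have h_comp_neg : (fun ω => A.indicator f (-ρ ω) * Real.exp (ρ ω)) =
      {ω | -ρ ω ∈ A}.indicator fun ω => f (-ρ ω) * Real.exp (ρ ω) := by
    ext ω
    exact (Set.indicator_mul_left {ω | -ρ ω ∈ A} (fun ω => f (-ρ ω)) fun ω => Real.exp (ρ ω)).symm
  rw [← integral_indicator₀ h_meas, ← integral_indicator₀ h_meas_neg, ← h_comp, ← h_comp_neg]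
  exact hsymm _ (hf.indicator hA) (h_comp ▸ hf_int.indicator₀ h_meas)

lemma setIntegral_even_mul_exp_right_tail (hsymm : LMHRSymmetric P ρ) {w : ℝ → ℝ}
    (hw : Measurable w) (hw_even : w.Even) (hw_int : Integrable (fun ω => w (ρ ω)) P)
    (hρ : AEMeasurable ρ P) (κ : ℝ) :
    ∫ ω in {ω | κ < ρ ω}, w (ρ ω) * Real.exp (ρ ω) ∂P = ∫ ω in {ω | ρ ω < -κ}, w (ρ ω) ∂P := by
  simpa only [hw_even _, Set.mem_Iio, neg_lt_neg_iff] using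
    hsymm.setIntegral_preimage_neg hw hw_int hρ (measurableSet_Iio (a := -κ))

end LMHRSymmetric

theorem stmt3_general (hρ : AEMeasurable ρ P) (hsymm : LMHRSymmetric P ρ) {w : ℝ → ℝ}
    (hw : Measurable w) (hw_even : w.Even) (hw_int : Integrable (fun ω => w (ρ ω)) P)
    {s κ : ℝ} (hs₀ : 0 ≤ s) (hs₁ : s ≤ 1) (hκ : 0 ≤ κ) :
    |∫ ω, w (ρ ω) * (∫ t in (0 : ℝ)..s, (1 - Real.exp (t * ρ ω))) ∂P|
      ≤ 2 * s * (Real.sinh (s * κ) * (∫ ω, |w (ρ ω)| ∂P)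
        + ∫ ω in {ω | ρ ω < -κ}, |w (ρ ω)| ∂P) := by
  have h_even : (fun x => |w x|).Even := fun x => congrArg abs (hw_even x)
  have h_exp_int := hsymm.integrable_even_mul_exp hw.abs h_even hw_int.abs hρ
  refine (abs_integral_mul_integral_one_sub_exp_le hρ hw_int h_exp_int.integrableOn
    hs₀ hs₁ hκ).trans_eq ?_
  rw [hsymm.setIntegral_even_mul_exp_right_tail hw.abs h_even hw_int.abs hρ]
  ring

end Expectation

/-- If `ρ` satisfies the log-Metropolis–Hastings-ratio symmetry and `E[ρ²] < ∞`, then for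
every `κ > 0`,
`|E[ρ² ∫₀^{1/2} (1 - e^{tρ}) dt]| ≤ sinh(κ/2) E[ρ²] + E[ρ² 1{ρ < -κ}]`. -/
theorem stmt3 {Ω : Type*} [MeasurableSpace Ω] (P : Measure Ω) [IsProbabilityMeasure P]
    (ρ : Ω → ℝ) (hρ : Measurable ρ) (hsymm : LMHRSymmetric P ρ)
    (h2 : Integrable (fun ω => (ρ ω) ^ 2) P) (κ : ℝ) (hκ : 0 < κ) :
    |∫ ω, (ρ ω) ^ 2 * (∫ t in (0 : ℝ)..(1 / 2), (1 - Real.exp (t * ρ ω))) ∂P|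
      ≤ Real.sinh (κ / 2) * (∫ ω, (ρ ω) ^ 2 ∂P)
        + ∫ ω in {ω | ρ ω < -κ}, (ρ ω) ^ 2 ∂P := by
  simpa [div_eq_inv_mul] using stmt3_general hρ.aemeasurable hsymm (w := (· ^ 2)) (by fun_prop)
    neg_sq h2 (s := 1 / 2) (by norm_num) (by norm_num) hκ.le
end

section
/- Let ρ be a real random variable on a probability space satisfying the log-Metropolis–Hastings-ratio symmetry with E[ρ²] < ∞, let f : ℝ → ℝ be a nonnegative measurable function with E[f(|ρ|)] < ∞, and let κ > 0. Then E[f(|ρ|) · 1{|ρ| > κ}] ≤ 2 · E[f(|ρ|) · 1{ρ < −κ}]. -/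
open MeasureTheory

/-! The symmetry trades the event `ρ ∈ A` for the event `-ρ ∈ A` at the cost of the weight `e^ρ`,
and this weight is at most `1` when `A` contains only nonnegative numbers. So the part of
`E[f(|ρ|) 1{|ρ| > κ}]` carried by `ρ > 0` is at most the mirrored part carried by `ρ < 0`. -/

namespace LMHRSymmetric

variable {Ω : Type*} [MeasurableSpace Ω] {P : Measure Ω} {ρ : Ω → ℝ} {A : Set ℝ} {g : ℝ → ℝ}

theorem setIntegral_neg_mul_exp (hsymm : LMHRSymmetric P ρ) (hρ : AEMeasurable ρ P)
    (hA : MeasurableSet A) (hg : Measurable g)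
    (hint : IntegrableOn (fun ω => g (ρ ω)) {ω | ρ ω ∈ A} P) :
    ∫ ω in {ω | -ρ ω ∈ A}, g (-ρ ω) * Real.exp (ρ ω) ∂P = ∫ ω in {ω | ρ ω ∈ A}, g (ρ ω) ∂P := by
  have hpos : NullMeasurableSet {ω | ρ ω ∈ A} P := hρ.nullMeasurableSet_preimage hA
  have hneg : NullMeasurableSet {ω | -ρ ω ∈ A} P := hρ.neg.nullMeasurableSet_preimage hA
  have indicator_pos : {ω | ρ ω ∈ A}.indicator (fun ω => g (ρ ω)) =
      fun ω => A.indicator g (ρ ω) := rfl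
  have indicator_neg : {ω | -ρ ω ∈ A}.indicator (fun ω => g (-ρ ω) * Real.exp (ρ ω)) =
      fun ω => A.indicator g (-ρ ω) * Real.exp (ρ ω) :=
    funext fun ω => Set.indicator_mul_left _ (fun ω => g (-ρ ω)) fun ω => Real.exp (ρ ω)
  rw [← integral_indicator₀ hneg, ← integral_indicator₀ hpos, indicator_neg, indicator_pos]
  exact hsymm _ (hg.indicator hA) (indicator_pos ▸ hint.integrable_indicator₀ hpos)

theorem setIntegral_le_setIntegral_neg (hsymm : LMHRSymmetric P ρ) (hρ : AEMeasurable ρ P)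
    (hA : MeasurableSet A) (hA_nonneg : ∀ x ∈ A, 0 ≤ x)
    (hg : Measurable g) (hg_nonneg : ∀ x ∈ A, 0 ≤ g x)
    (hint : IntegrableOn (fun ω => g (ρ ω)) {ω | ρ ω ∈ A} P)
    (hint_neg : IntegrableOn (fun ω => g (-ρ ω)) {ω | -ρ ω ∈ A} P) :
    ∫ ω in {ω | ρ ω ∈ A}, g (ρ ω) ∂P ≤ ∫ ω in {ω | -ρ ω ∈ A}, g (-ρ ω) ∂P := by
  have hmem : ∀ᵐ ω ∂P.restrict {ω | -ρ ω ∈ A}, -ρ ω ∈ A :=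
    ae_restrict_mem₀ (hρ.neg.nullMeasurableSet_preimage hA)
  rw [← hsymm.setIntegral_neg_mul_exp hρ hA hg hint]
  refine integral_mono_of_nonneg ?_ hint_neg ?_
  · filter_upwards [hmem] with ω hω
    exact mul_nonneg (hg_nonneg _ hω) (Real.exp_pos _).le
  · filter_upwards [hmem] with ω hω
    have exp_le_one : Real.exp (ρ ω) ≤ 1 :=
      Real.exp_le_one_iff.mpr (neg_nonneg.mp (hA_nonneg _ hω))
    exact mul_le_of_le_one_right (hg_nonneg _ hω) exp_le_one

theorem setIntegral_abs_le (hsymm : LMHRSymmetric P ρ) (hρ : AEMeasurable ρ P)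
    (hA : MeasurableSet A) (hA_nonneg : ∀ x ∈ A, 0 ≤ x)
    (hg : Measurable g) (hg_nonneg : ∀ x ∈ A, 0 ≤ g x)
    (hint : IntegrableOn (fun ω => g |ρ ω|) {ω | ρ ω ∈ A} P)
    (hint_neg : IntegrableOn (fun ω => g |ρ ω|) {ω | -ρ ω ∈ A} P) :
    ∫ ω in {ω | ρ ω ∈ A}, g |ρ ω| ∂P ≤ ∫ ω in {ω | -ρ ω ∈ A}, g |ρ ω| ∂P := by
  have hg_abs_nonneg : ∀ x ∈ A, 0 ≤ g |x| := fun x hx =>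
    (abs_of_nonneg (hA_nonneg x hx)).symm ▸ hg_nonneg x hx
  simpa only [abs_neg] using
    hsymm.setIntegral_le_setIntegral_neg hρ hA hA_nonneg (g := fun x => g |x|)
      (hg.comp measurable_abs) hg_abs_nonneg hint (by simpa only [abs_neg] using hint_neg)

end LMHRSymmetric

theorem stmt4_general {Ω : Type*} [MeasurableSpace Ω] {P : Measure Ω} {ρ : Ω → ℝ}
    (hρ : AEMeasurable ρ P) (hsymm : LMHRSymmetric P ρ)
    {f : ℝ → ℝ} (hf : Measurable f) (hf_nonneg : ∀ x, 0 ≤ f x)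
    (hint : Integrable (fun ω => f |ρ ω|) P) (κ : ℝ) :
    ∫ ω in {ω | κ < |ρ ω|}, f |ρ ω| ∂P ≤ 2 * ∫ ω in {ω | ρ ω < -κ}, f |ρ ω| ∂P := by
  let A : Set ℝ := {x | κ < |x|} ∩ Set.Ioi 0
  have hA : MeasurableSet A :=
    (measurableSet_lt measurable_const measurable_abs).inter measurableSet_Ioi
  have mono_of_subset {s : Set Ω} (hs : s ⊆ {ω | ρ ω < -κ}) :
      ∫ ω in s, f |ρ ω| ∂P ≤ ∫ ω in {ω | ρ ω < -κ}, f |ρ ω| ∂P :=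
    setIntegral_mono_set hint.integrableOn (.of_forall fun _ => hf_nonneg _) hs.eventuallyLE
  have pos_part : ∫ ω in {ω | ρ ω ∈ A}, f |ρ ω| ∂P ≤ ∫ ω in {ω | ρ ω < -κ}, f |ρ ω| ∂P :=
    (hsymm.setIntegral_abs_le hρ hA (fun _ hx => hx.2.le) hf (fun _ _ => hf_nonneg _)
      hint.integrableOn hint.integrableOn).trans <|
      mono_of_subset fun ω ⟨(hκ : κ < |-ρ ω|), (hneg : 0 < -ρ ω)⟩ =>
        lt_neg.mp (hκ.trans_eq (abs_of_pos hneg))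
  have nonpos_part : ∫ ω in {ω | κ < |ρ ω|} \ {ω | 0 < ρ ω}, f |ρ ω| ∂P ≤
      ∫ ω in {ω | ρ ω < -κ}, f |ρ ω| ∂P :=
    mono_of_subset fun ω ⟨(hκ : κ < |ρ ω|), hnonpos⟩ =>
      lt_neg.mp (hκ.trans_eq (abs_of_nonpos (not_lt.mp hnonpos)))
  calc
    _ = ∫ ω in {ω | ρ ω ∈ A}, f |ρ ω| ∂P +
          ∫ ω in {ω | κ < |ρ ω|} \ {ω | 0 < ρ ω}, f |ρ ω| ∂P :=
      (integral_inter_add_sdiff₀ (hρ.nullMeasurableSet_preimage measurableSet_Ioi)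
        hint.integrableOn).symm
    _ ≤ _ := (add_le_add pos_part nonpos_part).trans_eq (two_mul _).symm

/-- If `ρ` satisfies the log-Metropolis–Hastings-ratio symmetry, `E[ρ²] < ∞`, and `f` is a
nonnegative measurable function with `E[f(|ρ|)] < ∞`, then for every `κ > 0`,
`E[f(|ρ|) 1{|ρ| > κ}] ≤ 2 E[f(|ρ|) 1{ρ < -κ}]`. -/
theorem stmt4 {Ω : Type*} [MeasurableSpace Ω] (P : Measure Ω) [IsProbabilityMeasure P]
    (ρ : Ω → ℝ) (hρ : Measurable ρ) (hsymm : LMHRSymmetric P ρ)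
    (h2 : Integrable (fun ω => (ρ ω) ^ 2) P)
    (f : ℝ → ℝ) (hf : Measurable f) (hfnn : ∀ x, 0 ≤ f x)
    (hfint : Integrable (fun ω => f |ρ ω|) P)
    (κ : ℝ) (hκ : 0 < κ) :
    ∫ ω in {ω | κ < |ρ ω|}, f |ρ ω| ∂P ≤ 2 * ∫ ω in {ω | ρ ω < -κ}, f |ρ ω| ∂P :=
  stmt4_general hρ.aemeasurable hsymm hf hfnn hfint κ
end

section
/- Let (ρₙ)ₙ be a sequence of real random variables (possibly on different probability spaces), each satisfying the log-Metropolis–Hastings-ratio symmetry, with E[ρₙ²] < ∞ for all n and E[ρₙ²] → 0 as n → ∞. Suppose there exist positive constants κₙ → 0 such that E[ρₙ² · 1{ρₙ < −κₙ}] = o(E[ρₙ²]) as n → ∞. Then |E[ρₙ] + (1/2)·E[ρₙ²]| ≤ sinh(κₙ/2)·E[ρₙ²] + E[ρₙ² · 1{ρₙ < −κₙ}] = o(E[ρₙ²]), and moreover E[ρₙ] + (1/2)·Var(ρₙ) = o(E[ρₙ²]) as n → ∞. -/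
open MeasureTheory Filter

/-!
The symmetry says that the law of `ρ`, reweighted by `e^{ρ/2}`, is symmetric about the origin. Hence
`E[f(ρ)] = -E[f(ρ) tanh(ρ/2)]` for odd `f`, and `f = id` gives
`E[ρ] + E[ρ²]/2 = E[ρ²/2 - ρ tanh(ρ/2)]`. The integrand on the right lies between `0` and `ρ²/2`,
and it is at most `sinh(κ/2) ρ²` where `|ρ| ≤ κ`. By the symmetry the right tail `ρ > κ`
contributes at most as much to `E[ρ²]` as the left tail `ρ < -κ`, so half the two tails together
is at most `E[ρ² 1{ρ < -κ}]`. The variance differs from `E[ρ²]` by `E[ρ]²`, which is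
`O(E[ρ²]²) = o(E[ρ²])`.
-/

open Asymptotics ProbabilityTheory

theorem sinh_le_mul_cosh {t : ℝ} (ht : 0 ≤ t) : Real.sinh t ≤ t * Real.cosh t := by
  have deriv_le : ∀ x ∈ interior (Set.Icc 0 t), deriv Real.sinh x ≤ Real.cosh t := by
    intro x hx
    rw [interior_Icc] at hx
    rw [Real.deriv_sinh, Real.cosh_le_cosh, abs_of_pos hx.1, abs_of_nonneg ht]
    exact hx.2.le
  have := (convex_Icc 0 t).image_sub_le_mul_sub_of_deriv_le Real.continuous_sinh.continuousOn
    Real.differentiable_sinh.differentiableOn deriv_le 0 (Set.left_mem_Icc.2 ht) t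
    (Set.right_mem_Icc.2 ht) ht
  rwa [Real.sinh_zero, sub_zero, sub_zero, mul_comm] at this

theorem tanh_le_self {t : ℝ} (ht : 0 ≤ t) : Real.tanh t ≤ t := by
  rw [Real.tanh_eq_sinh_div_cosh, div_le_iff₀ (Real.cosh_pos t)]
  exact sinh_le_mul_cosh ht

theorem tanh_nonneg {t : ℝ} (ht : 0 ≤ t) : 0 ≤ Real.tanh t := by
  rw [Real.tanh_eq_sinh_div_cosh]
  exact div_nonneg (Real.sinh_nonneg_iff.2 ht) (Real.cosh_pos t).le

theorem self_sub_tanh_le_mul_sinh {t : ℝ} (ht : 0 ≤ t) : t - Real.tanh t ≤ t * Real.sinh t := by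
  have sinh_nonneg : 0 ≤ Real.sinh t := Real.sinh_nonneg_iff.2 ht
  have cosh_sub_one_le : Real.cosh t - 1 ≤ Real.sinh t * Real.cosh t := by
    calc Real.cosh t - 1 ≤ Real.sinh t := by
          linarith [Real.cosh_sub_sinh t, Real.exp_le_one_iff.2 (neg_nonpos.2 ht)]
      _ ≤ Real.sinh t * Real.cosh t := le_mul_of_one_le_right sinh_nonneg (Real.one_le_cosh t)
  have self_le_sinh : t ≤ Real.sinh t := Real.self_le_sinh_iff.2 ht
  rw [Real.tanh_eq_sinh_div_cosh, sub_le_comm, le_div_iff₀ (Real.cosh_pos t)]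
  linarith [mul_le_mul_of_nonneg_left cosh_sub_one_le ht]

theorem tanh_half_eq_two_mul_sigmoid_sub_one (y : ℝ) :
    Real.tanh (y / 2) = 2 * Real.sigmoid y - 1 := by
  have exp_neg_eq : Real.exp (-y) = Real.exp (-(y / 2)) / Real.exp (y / 2) := by
    rw [← Real.exp_sub]
    ring_nf
  rw [Real.tanh_eq, Real.sigmoid_def, exp_neg_eq]
  field

theorem abs_mul_tanh_half_abs (y : ℝ) : |y| * Real.tanh (|y| / 2) = y * Real.tanh (y / 2) := by
  rcases abs_choice y with h | h <;> simp [h, neg_div]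

theorem half_sq_sub_mul_tanh_nonneg (y : ℝ) : 0 ≤ 1 / 2 * y ^ 2 - y * Real.tanh (y / 2) := by
  rw [← abs_mul_tanh_half_abs, ← sq_abs]
  have tanh_le : Real.tanh (|y| / 2) ≤ |y| / 2 := tanh_le_self (by positivity)
  linarith [mul_le_mul_of_nonneg_left tanh_le (abs_nonneg y)]

theorem half_sq_sub_mul_tanh_le_half_sq (y : ℝ) :
    1 / 2 * y ^ 2 - y * Real.tanh (y / 2) ≤ 1 / 2 * y ^ 2 := by
  rw [← abs_mul_tanh_half_abs]
  exact sub_le_self _ (mul_nonneg (abs_nonneg y) (tanh_nonneg (by positivity)))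

theorem half_sq_sub_mul_tanh_le_sinh_mul_sq {y κ : ℝ} (hy : |y| ≤ κ) :
    1 / 2 * y ^ 2 - y * Real.tanh (y / 2) ≤ Real.sinh (κ / 2) * y ^ 2 := by
  have half_abs_nonneg : 0 ≤ |y| / 2 := by positivity
  have sinh_le : Real.sinh (|y| / 2) ≤ Real.sinh (κ / 2) := Real.sinh_le_sinh.2 (by linarith)
  have sinh_nonneg : 0 ≤ Real.sinh (|y| / 2) := Real.sinh_nonneg_iff.2 half_abs_nonneg
  calc 1 / 2 * y ^ 2 - y * Real.tanh (y / 2)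
      = |y| * (|y| / 2 - Real.tanh (|y| / 2)) := by
        rw [← abs_mul_tanh_half_abs, ← sq_abs]
        ring
    _ ≤ |y| * (|y| / 2 * Real.sinh (|y| / 2)) := by
        gcongr
        exact self_sub_tanh_le_mul_sinh half_abs_nonneg
    _ = 1 / 2 * (Real.sinh (|y| / 2) * y ^ 2) := by
        rw [← sq_abs y]
        ring
    _ ≤ Real.sinh (|y| / 2) * y ^ 2 := by linarith [mul_nonneg sinh_nonneg (sq_nonneg y)]
    _ ≤ Real.sinh (κ / 2) * y ^ 2 := by gcongr

theorem half_sq_sub_mul_tanh_le_sinh_mul_sq_add_tails {κ : ℝ} (hκ : 0 ≤ κ) (y : ℝ) :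
    1 / 2 * y ^ 2 - y * Real.tanh (y / 2) ≤ Real.sinh (κ / 2) * y ^ 2 +
      1 / 2 * ((Set.Iio (-κ)).indicator (· ^ 2) y + (Set.Ioi κ).indicator (· ^ 2) y) := by
  have sinh_mul_sq_nonneg : 0 ≤ Real.sinh (κ / 2) * y ^ 2 :=
    mul_nonneg (Real.sinh_nonneg_iff.2 (by positivity)) (sq_nonneg y)
  rcases lt_or_ge y (-κ) with left | left
  · have right : y ∉ Set.Ioi κ := by simp only [Set.mem_Ioi]; linarith
    rw [Set.indicator_of_mem (Set.mem_Iio.2 left), Set.indicator_of_notMem right]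
    linarith [half_sq_sub_mul_tanh_le_half_sq y]
  rw [Set.indicator_of_notMem (Set.notMem_Iio.2 left)]
  rcases lt_or_ge κ y with right | right
  · rw [Set.indicator_of_mem (Set.mem_Ioi.2 right)]
    linarith [half_sq_sub_mul_tanh_le_half_sq y]
  · rw [Set.indicator_of_notMem (Set.notMem_Ioi.2 right), add_zero, mul_zero, add_zero]
    exact half_sq_sub_mul_tanh_le_sinh_mul_sq (abs_le.2 ⟨left, right⟩)

section Integrability

variable {Ω : Type*} [MeasurableSpace Ω] {P : Measure Ω} {ρ : Ω → ℝ} {f : ℝ → ℝ}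

theorem integrable_mul_sigmoid (hρ : AEMeasurable ρ P) (hfi : Integrable (fun ω => f (ρ ω)) P) :
    Integrable (fun ω => f (ρ ω) * Real.sigmoid (ρ ω)) P := by
  refine hfi.mul_bdd (c := 1)
    (continuous_sigmoid.measurable.comp_aemeasurable hρ).aestronglyMeasurable
    (.of_forall fun ω => ?_)
  rw [Real.norm_of_nonneg (Real.sigmoid_nonneg _)]
  exact Real.sigmoid_le_one _

theorem integrable_mul_tanh_half (hρ : AEMeasurable ρ P)
    (hfi : Integrable (fun ω => f (ρ ω)) P) :
    Integrable (fun ω => f (ρ ω) * Real.tanh (ρ ω / 2)) P := by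
  refine (((integrable_mul_sigmoid hρ hfi).const_mul 2).sub hfi).congr (.of_forall fun ω => ?_)
  simp only [Pi.sub_apply, tanh_half_eq_two_mul_sigmoid_sub_one]
  ring

theorem integrable_indicator_comp (hρ : AEMeasurable ρ P)
    (hfi : Integrable (fun ω => f (ρ ω)) P) {s : Set ℝ} (hs : MeasurableSet s) :
    Integrable (fun ω => s.indicator f (ρ ω)) P :=
  hfi.indicator₀ (hρ.nullMeasurableSet_preimage hs)

end Integrability

namespace LMHRSymmetric

variable {Ω : Type*} [MeasurableSpace Ω] {P : Measure Ω} {ρ : Ω → ℝ} {f : ℝ → ℝ}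

theorem integral_odd_mul_sigmoid_eq_zero (hsymm : LMHRSymmetric P ρ) (hf : Measurable f)
    (hodd : f.Odd) (hfσ : Integrable (fun ω => f (ρ ω) * Real.sigmoid (ρ ω)) P) :
    ∫ ω, f (ρ ω) * Real.sigmoid (ρ ω) ∂P = 0 := by
  have reflect (y : ℝ) :
      f (-y) * Real.sigmoid (-y) * Real.exp y = -(f y * Real.sigmoid y) := by
    have sigmoid_neg_mul_exp : Real.sigmoid (-y) * Real.exp y = Real.sigmoid y := by
      simpa only [neg_neg] using Real.sigmoid_mul_rexp_neg (-y)
    rw [mul_assoc, sigmoid_neg_mul_exp, hodd, neg_mul]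
  have key := hsymm (fun y => f y * Real.sigmoid y) (hf.mul continuous_sigmoid.measurable) hfσ
  simp only [reflect, integral_neg] at key
  linarith

theorem integral_odd_eq_neg_integral_mul_tanh_half (hsymm : LMHRSymmetric P ρ)
    (hρ : AEMeasurable ρ P) (hf : Measurable f) (hodd : f.Odd)
    (hfi : Integrable (fun ω => f (ρ ω)) P) :
    ∫ ω, f (ρ ω) ∂P = -∫ ω, f (ρ ω) * Real.tanh (ρ ω / 2) ∂P := by
  have hfσ := integrable_mul_sigmoid hρ hfi
  have expand (ω : Ω) : f (ρ ω) * Real.tanh (ρ ω / 2)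
      = 2 * (f (ρ ω) * Real.sigmoid (ρ ω)) - f (ρ ω) := by
    rw [tanh_half_eq_two_mul_sigmoid_sub_one]
    ring
  simp only [expand]
  rw [integral_sub (hfσ.const_mul 2) hfi, integral_const_mul,
    hsymm.integral_odd_mul_sigmoid_eq_zero hf hodd hfσ]
  ring

theorem integral_indicator_Ioi_le_integral_indicator_Iio_neg (hsymm : LMHRSymmetric P ρ)
    (hρ : AEMeasurable ρ P) (hf : Measurable f) (heven : f.Even) (hnonneg : 0 ≤ f)
    (hfi : Integrable (fun ω => f (ρ ω)) P) {c : ℝ} (hc : 0 ≤ c) :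
    ∫ ω, (Set.Ioi c).indicator f (ρ ω) ∂P ≤ ∫ ω, (Set.Iio (-c)).indicator f (ρ ω) ∂P := by
  have indicator_neg (y : ℝ) :
      (Set.Ioi c).indicator f (-y) = (Set.Iio (-c)).indicator f y := by
    simp only [Set.indicator_apply, Set.mem_Ioi, Set.mem_Iio, lt_neg, heven y]
  have indicator_nonneg (y : ℝ) : 0 ≤ (Set.Iio (-c)).indicator f y :=
    Set.indicator_nonneg (fun x _ => hnonneg x) y
  rw [← hsymm _ (hf.indicator measurableSet_Ioi)
    (integrable_indicator_comp hρ hfi measurableSet_Ioi)]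
  simp only [indicator_neg]
  refine integral_mono_of_nonneg
    (.of_forall fun ω => mul_nonneg (indicator_nonneg _) (Real.exp_pos _).le)
    (integrable_indicator_comp hρ hfi measurableSet_Iio) (.of_forall fun ω => ?_)
  by_cases h : ρ ω ∈ Set.Iio (-c)
  · have exp_le_one : Real.exp (ρ ω) ≤ 1 :=
      Real.exp_le_one_iff.2 (h.le.trans (neg_nonpos.2 hc))
    exact mul_le_of_le_one_right (indicator_nonneg _) exp_le_one
  · simp only [Set.indicator_of_notMem h, zero_mul, le_refl]

variable [IsFiniteMeasure P]

theorem integral_add_half_integral_sq_eq (hsymm : LMHRSymmetric P ρ) (hρ : MemLp ρ 2 P) :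
    ∫ ω, ρ ω ∂P + 1 / 2 * ∫ ω, ρ ω ^ 2 ∂P
      = ∫ ω, (1 / 2 * ρ ω ^ 2 - ρ ω * Real.tanh (ρ ω / 2)) ∂P := by
  have integrable_ρ : Integrable (fun ω => id (ρ ω)) P := hρ.integrable one_le_two
  have mean_eq : ∫ ω, ρ ω ∂P = -∫ ω, ρ ω * Real.tanh (ρ ω / 2) ∂P :=
    hsymm.integral_odd_eq_neg_integral_mul_tanh_half hρ.aemeasurable measurable_id
      (fun _ => rfl) integrable_ρ
  have integrable_mul_tanh : Integrable (fun ω => ρ ω * Real.tanh (ρ ω / 2)) P :=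
    integrable_mul_tanh_half hρ.aemeasurable integrable_ρ
  rw [integral_sub (hρ.integrable_sq.const_mul _) integrable_mul_tanh, integral_const_mul, mean_eq]
  ring

theorem abs_integral_add_half_integral_sq_le (hsymm : LMHRSymmetric P ρ) (hρ : MemLp ρ 2 P)
    {κ : ℝ} (hκ : 0 ≤ κ) :
    |∫ ω, ρ ω ∂P + 1 / 2 * ∫ ω, ρ ω ^ 2 ∂P|
      ≤ Real.sinh (κ / 2) * ∫ ω, ρ ω ^ 2 ∂P + ∫ ω in {ω | ρ ω < -κ}, ρ ω ^ 2 ∂P := by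
  let left (ω : Ω) : ℝ := (Set.Iio (-κ)).indicator (· ^ 2) (ρ ω)
  let right (ω : Ω) : ℝ := (Set.Ioi κ).indicator (· ^ 2) (ρ ω)
  have integrable_left : Integrable left P :=
    integrable_indicator_comp hρ.aemeasurable hρ.integrable_sq measurableSet_Iio
  have integrable_right : Integrable right P :=
    integrable_indicator_comp hρ.aemeasurable hρ.integrable_sq measurableSet_Ioi
  have integrable_tails : Integrable (fun ω => 1 / 2 * (left ω + right ω)) P :=
    (integrable_left.add integrable_right).const_mul _
  have right_le_left : ∫ ω, right ω ∂P ≤ ∫ ω, left ω ∂P :=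
    hsymm.integral_indicator_Ioi_le_integral_indicator_Iio_neg hρ.aemeasurable
      (measurable_id.pow_const 2) neg_sq sq_nonneg hρ.integrable_sq hκ
  have left_eq : ∫ ω, left ω ∂P = ∫ ω in {ω | ρ ω < -κ}, ρ ω ^ 2 ∂P :=
    integral_indicator₀ (hρ.aemeasurable.nullMeasurableSet_preimage measurableSet_Iio)
  have integrand_nonneg (ω : Ω) : 0 ≤ 1 / 2 * ρ ω ^ 2 - ρ ω * Real.tanh (ρ ω / 2) :=
    half_sq_sub_mul_tanh_nonneg (ρ ω)
  rw [hsymm.integral_add_half_integral_sq_eq hρ, abs_of_nonneg (integral_nonneg integrand_nonneg)]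
  calc ∫ ω, (1 / 2 * ρ ω ^ 2 - ρ ω * Real.tanh (ρ ω / 2)) ∂P
      ≤ ∫ ω, (Real.sinh (κ / 2) * ρ ω ^ 2 + 1 / 2 * (left ω + right ω)) ∂P :=
        integral_mono_of_nonneg (.of_forall integrand_nonneg)
          ((hρ.integrable_sq.const_mul _).add integrable_tails)
          (.of_forall fun ω => half_sq_sub_mul_tanh_le_sinh_mul_sq_add_tails hκ (ρ ω))
    _ = Real.sinh (κ / 2) * ∫ ω, ρ ω ^ 2 ∂P
          + 1 / 2 * (∫ ω, left ω ∂P + ∫ ω, right ω ∂P) := by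
        rw [integral_add (hρ.integrable_sq.const_mul _) integrable_tails, integral_const_mul,
          integral_const_mul, integral_add integrable_left integrable_right]
    _ ≤ Real.sinh (κ / 2) * ∫ ω, ρ ω ^ 2 ∂P + ∫ ω in {ω | ρ ω < -κ}, ρ ω ^ 2 ∂P := by
        linarith

end LMHRSymmetric

section Asymptotics

variable {ι : Type*} {l : Filter ι}

theorem tendsto_sinh_half_nhds_zero {κ : ι → ℝ} (hκ : Tendsto κ l (nhds 0)) :
    Tendsto (fun i => Real.sinh (κ i / 2)) l (nhds 0) := by
  have half_tendsto : Tendsto (fun i => κ i / 2) l (nhds 0) := by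
    simpa only [zero_div] using hκ.div_const 2
  have := (Real.continuous_sinh.tendsto 0).comp half_tendsto
  rwa [Real.sinh_zero] at this

theorem isLittleO_add_half_sub_sq {a m : ι → ℝ} (hm : Tendsto m l (nhds 0))
    (ham : (fun i => a i + 1 / 2 * m i) =o[l] m) :
    (fun i => a i + 1 / 2 * (m i - a i ^ 2)) =o[l] m := by
  have a_isBigO : a =O[l] m := by
    have := ham.isBigO.sub ((isBigO_refl m l).const_mul_left (1 / 2))
    simpa only [add_sub_cancel_right] using this
  have a_isLittleO_one : a =o[l] (fun _ => (1 : ℝ)) :=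
    (isLittleO_one_iff ℝ).2 (a_isBigO.trans_tendsto hm)
  have sq_isLittleO : (fun i => a i ^ 2) =o[l] m := by
    simpa only [one_mul, ← sq] using a_isLittleO_one.mul_isBigO a_isBigO
  refine (ham.sub (sq_isLittleO.const_mul_left (1 / 2))).congr_left fun i => ?_
  ring

theorem setIntegral_isLittleO_of_tendsto_div {Ω : ι → Type*} [∀ i, MeasurableSpace (Ω i)]
    {P : ∀ i, Measure (Ω i)} {g : ∀ i, Ω i → ℝ} {s : ∀ i, Set (Ω i)} (hg : ∀ i, 0 ≤ g i)
    (hgi : ∀ i, Integrable (g i) (P i))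
    (h : Tendsto (fun i => (∫ ω in s i, g i ω ∂P i) / ∫ ω, g i ω ∂P i) l (nhds 0)) :
    (fun i => ∫ ω in s i, g i ω ∂P i) =o[l] (fun i => ∫ ω, g i ω ∂P i) := by
  refine (isLittleO_iff_tendsto fun i hi => le_antisymm ?_ ?_).2 h
  · exact (setIntegral_le_integral (hgi i) (.of_forall (hg i))).trans_eq hi
  · exact integral_nonneg (hg i)

end Asymptotics

theorem stmt5_general {ι : Type*} {l : Filter ι} {Ω : ι → Type*} [∀ i, MeasurableSpace (Ω i)]
    (P : ∀ i, Measure (Ω i)) [∀ i, IsProbabilityMeasure (P i)]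
    (ρ : ∀ i, Ω i → ℝ) (hρ : ∀ i, MemLp (ρ i) 2 (P i))
    (hsymm : ∀ i, LMHRSymmetric (P i) (ρ i))
    (hto0 : Tendsto (fun i => ∫ ω, ρ i ω ^ 2 ∂P i) l (nhds 0))
    (κ : ι → ℝ) (hκ : ∀ i, 0 ≤ κ i) (hκ0 : Tendsto κ l (nhds 0))
    (hneg : Tendsto
      (fun i => (∫ ω in {ω | ρ i ω < -κ i}, ρ i ω ^ 2 ∂P i) / ∫ ω, ρ i ω ^ 2 ∂P i) l (nhds 0)) :
    (∀ i, |(∫ ω, ρ i ω ∂P i) + (1 / 2) * ∫ ω, ρ i ω ^ 2 ∂P i|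
        ≤ Real.sinh (κ i / 2) * (∫ ω, ρ i ω ^ 2 ∂P i)
          + ∫ ω in {ω | ρ i ω < -κ i}, ρ i ω ^ 2 ∂P i)
    ∧ Tendsto
        (fun i => (Real.sinh (κ i / 2) * (∫ ω, ρ i ω ^ 2 ∂P i)
          + ∫ ω in {ω | ρ i ω < -κ i}, ρ i ω ^ 2 ∂P i) / ∫ ω, ρ i ω ^ 2 ∂P i) l (nhds 0)
    ∧ Tendsto
        (fun i => ((∫ ω, ρ i ω ∂P i) + (1 / 2) * variance (ρ i) (P i))
          / ∫ ω, ρ i ω ^ 2 ∂P i) l (nhds 0) := by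
  have bound (i : ι) := (hsymm i).abs_integral_add_half_integral_sq_le (hρ i) (hκ i)
  have tail_isLittleO := setIntegral_isLittleO_of_tendsto_div
    (fun i ω => sq_nonneg (ρ i ω)) (fun i => (hρ i).integrable_sq) hneg
  have sinh_mul_isLittleO : (fun i => Real.sinh (κ i / 2) * ∫ ω, ρ i ω ^ 2 ∂P i)
      =o[l] (fun i => ∫ ω, ρ i ω ^ 2 ∂P i) := by
    have sinh_isLittleO := (isLittleO_one_iff ℝ).2 (tendsto_sinh_half_nhds_zero hκ0)
    simpa only [one_mul] using sinh_isLittleO.mul_isBigO (isBigO_refl _ l)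
  have bound_isLittleO := sinh_mul_isLittleO.add tail_isLittleO
  have mean_isBigO := IsBigO.of_norm_le (l := l) fun i => (Real.norm_eq_abs _).trans_le (bound i)
  refine ⟨bound, bound_isLittleO.tendsto_div_nhds_zero, ?_⟩
  simp only [variance_eq_sub (hρ _), Pi.pow_apply]
  exact (isLittleO_add_half_sub_sq hto0
    (mean_isBigO.trans_isLittleO bound_isLittleO)).tendsto_div_nhds_zero

/-- "Half variance plus mean is asymptotically negligible": for a sequence `ρₙ` of random
variables (possibly on different probability spaces), each satisfying the
log-Metropolis–Hastings-ratio symmetry, with `E[ρₙ²] → 0` and positive `κₙ → 0` such that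
`E[ρₙ² 1{ρₙ < -κₙ}] = o(E[ρₙ²])`, one has
`|E[ρₙ] + (1/2) E[ρₙ²]| ≤ sinh(κₙ/2) E[ρₙ²] + E[ρₙ² 1{ρₙ < -κₙ}] = o(E[ρₙ²])`, and
`E[ρₙ] + (1/2) Var(ρₙ) = o(E[ρₙ²])`. -/
theorem stmt5 {Ω : ℕ → Type*} [∀ n, MeasurableSpace (Ω n)]
    (P : ∀ n, Measure (Ω n)) [∀ n, IsProbabilityMeasure (P n)]
    (ρ : ∀ n, Ω n → ℝ) (hmeas : ∀ n, Measurable (ρ n))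
    (hsymm : ∀ n, LMHRSymmetric (P n) (ρ n))
    (h2 : ∀ n, Integrable (fun ω => (ρ n ω) ^ 2) (P n))
    (h2to0 : Tendsto (fun n => ∫ ω, (ρ n ω) ^ 2 ∂P n) atTop (nhds 0))
    (κ : ℕ → ℝ) (hκpos : ∀ n, 0 < κ n) (hκ0 : Tendsto κ atTop (nhds 0))
    (hneg : Tendsto
      (fun n => (∫ ω in {ω | ρ n ω < -κ n}, (ρ n ω) ^ 2 ∂P n) / ∫ ω, (ρ n ω) ^ 2 ∂P n)
      atTop (nhds 0)) :
    (∀ n, |(∫ ω, ρ n ω ∂P n) + (1 / 2) * ∫ ω, (ρ n ω) ^ 2 ∂P n|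
        ≤ Real.sinh (κ n / 2) * (∫ ω, (ρ n ω) ^ 2 ∂P n)
          + ∫ ω in {ω | ρ n ω < -κ n}, (ρ n ω) ^ 2 ∂P n)
    ∧ Tendsto
        (fun n => (Real.sinh (κ n / 2) * (∫ ω, (ρ n ω) ^ 2 ∂P n)
          + ∫ ω in {ω | ρ n ω < -κ n}, (ρ n ω) ^ 2 ∂P n) / ∫ ω, (ρ n ω) ^ 2 ∂P n)
        atTop (nhds 0)
    ∧ Tendsto
        (fun n => ((∫ ω, ρ n ω ∂P n) + (1 / 2) * ProbabilityTheory.variance (ρ n) (P n))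
          / ∫ ω, (ρ n ω) ^ 2 ∂P n)
        atTop (nhds 0) :=
  stmt5_general P ρ
    (fun n => (memLp_two_iff_integrable_sq (hmeas n).aestronglyMeasurable).2 (h2 n))
    hsymm h2to0 κ (fun n => (hκpos n).le) hκ0 hneg
end

section
/- Every finite simple graph in which every vertex has degree at most 2 admits a proper 3-colouring (adjacent vertices receive distinct colours) whose three colour classes have sizes that pairwise differ by at most 1; equivalently, if the graph has N vertices then each colour class has size between ⌊N/3⌋ and ⌈N/3⌉. -/
/-!
In a claw-free graph, in particular in one of maximal degree two, a vertex has at most two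
neighbours in any colour class of a proper colouring, because these are pairwise non-adjacent. So
the bipartite graph spanned by two colour classes has maximal degree two. If a connected component
of it (a Kempe chain) has `a` vertices of the first colour and `b` of the second, it has at most
`2 * b` edges, and being connected at least `a + b - 1`; hence `a ≤ b + 1`. If the first class is
larger than the second, then some Kempe chain has exactly one more vertex of the first colour, and
exchanging the colours along it moves one unit from the first class size to the second. When the
sizes differ by at least two this decreases the sum of the squares of the class sizes, so a
colouring minimising that sum is equitable.
-/

open Finset SimpleGraph

section Counting

variable {ι κ : Type*}

theorem le_sum_ceilDiv_card_of_equitableOn {s : Finset ι} {f : ι → ℕ}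
    (h : (s : Set ι).EquitableOn f) {a : ι} (ha : a ∈ s) : f a ≤ (∑ i ∈ s, f i) ⌈/⌉ #s := by
  have hs : 0 < #s := card_pos.2 ⟨a, ha⟩
  have hlt : f a * #s < ∑ i ∈ s, f i + #s := calc
    f a * #s = ∑ _i ∈ s, f a := by rw [sum_const, smul_eq_mul, mul_comm]
    _ < ∑ i ∈ s, (f i + 1) := sum_lt_sum (fun i hi ↦ h ha hi) ⟨a, ha, Nat.lt_succ_self _⟩
    _ = ∑ i ∈ s, f i + #s := by rw [sum_add_distrib, card_eq_sum_ones]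
  rw [Nat.ceilDiv_eq_add_pred_div, Nat.le_div_iff_mul_le hs]
  exact Nat.le_sub_one_of_lt hlt

theorem exists_card_fiber_lt_of_card_lt [DecidableEq κ] {s t : Finset ι} (f : ι → κ)
    (h : #s < #t) : ∃ b, #{x ∈ s | f x = b} < #{x ∈ t | f x = b} := by
  have hsum : ∑ b ∈ t.image f, #{x ∈ s | f x = b} < ∑ b ∈ t.image f, #{x ∈ t | f x = b} := calc
    _ = #{x ∈ s | f x ∈ t.image f} := sum_card_fiberwise_eq_card_filter _ _ _
    _ ≤ #s := card_filter_le _ _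
    _ < #t := h
    _ = _ := card_eq_sum_card_image f t
  obtain ⟨b, -, hb⟩ := exists_lt_of_sum_lt hsum
  exact ⟨b, hb⟩

theorem sum_sq_lt_of_transfer [Fintype ι] {f g : ι → ℕ} {i j : ι} (hgap : f j + 1 < f i)
    (hi : g i + 1 = f i) (hj : g j = f j + 1) (hrest : ∀ k, k ≠ i → k ≠ j → g k = f k) :
    ∑ k, g k ^ 2 < ∑ k, f k ^ 2 := by
  classical
  have hij : i ≠ j := by rintro rfl; omega
  have split (h : ι → ℕ) : ∑ k, h k = h i + h j + ∑ k ∈ {i, j}ᶜ, h k := by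
    rw [← sum_pair hij, sum_add_sum_compl]
  have hcompl : ∑ k ∈ {i, j}ᶜ, g k ^ 2 = ∑ k ∈ {i, j}ᶜ, f k ^ 2 := by
    refine sum_congr rfl fun k hk ↦ ?_
    obtain ⟨hki, hkj⟩ : k ≠ i ∧ k ≠ j := by simpa using hk
    rw [hrest k hki hkj]
  rw [split, split (fun k ↦ f k ^ 2), hcompl, hj, ← hi]
  nlinarith

end Counting

section Coloring

variable {V α : Type*} {G : SimpleGraph V}

/-- A graph is claw-free if no vertex has three pairwise non-adjacent neighbours. This is the local
hypothesis under which Kempe chains are balanced up to one vertex. -/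
def IsClawFree (G : SimpleGraph V) : Prop :=
  ∀ v, G.IndepSetFreeOn (G.neighborSet v) 3

theorem isClawFree_of_degree_le_two [G.LocallyFinite] (h : ∀ v, G.degree v ≤ 2) :
    IsClawFree G := by
  intro v t ht hindep
  have hle : #t ≤ #(G.neighborFinset v) := card_le_card fun w hw ↦ by simpa using ht hw
  rw [hindep.card_eq, card_neighborFinset_eq_degree] at hle
  exact absurd (hle.trans (h v)) (by decide)

theorem IsClawFree.card_le_two (hG : IsClawFree G) {v : V} {s : Finset V}
    (hs : (s : Set V) ⊆ G.neighborSet v) (hindep : G.IsIndepSet s) : #s ≤ 2 := by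
  by_contra! hcard
  obtain ⟨t, hts, ht⟩ := exists_subset_card_eq hcard
  exact hG v ((coe_subset.2 hts).trans hs) ⟨hindep.mono (coe_subset.2 hts), ht⟩

/-- The colouring is greedy, along a well-order of the vertices. -/
theorem colorable_of_forall_degree_lt [G.LocallyFinite] {n : ℕ} (h : ∀ v, G.degree v < n) :
    G.Colorable n := by
  obtain ⟨_, _⟩ := exists_wellFoundedLT V
  have free (v : V) (f : ∀ w, w < v → Fin n) : ∃ k, ∀ w (hw : w < v), G.Adj v w → f w hw ≠ k := by
    let used := ((G.neighborFinset v).subtype (· < v)).image fun (w : {w // w < v}) ↦ f w w.2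
    have hused : #used < #(univ : Finset (Fin n)) := calc
      #used ≤ #{w ∈ G.neighborFinset v | w < v} := card_image_le.trans (card_subtype _ _).le
      _ ≤ G.degree v := card_filter_le _ _
      _ < #(univ : Finset (Fin n)) := by simpa using h v
    obtain ⟨k, -, hk⟩ := exists_mem_notMem_of_card_lt_card hused
    exact ⟨k, fun w hw hvw hwk ↦
      hk (mem_image.2 ⟨⟨w, hw⟩, by simpa only [mem_subtype, mem_neighborFinset] using hvw, hwk⟩)⟩
  choose pick hpick using free
  let c : V → Fin n := WellFoundedLT.fix pick
  have hlt {v w : V} (hvw : G.Adj v w) (hw : w < v) : c v ≠ c w := by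
    have := hpick v (fun w _ ↦ c w) w hw hvw
    rw [show c v = pick v fun w _ ↦ c w from WellFoundedLT.fix_eq pick v]
    exact this.symm
  refine ⟨Coloring.mk c fun {v w} hvw ↦ ?_⟩
  rcases hvw.ne.lt_or_gt with hv | hw
  · exact (hlt hvw.symm hv).symm
  · exact hlt hvw hw

theorem card_add_card_le_card_mul_add_one_of_connected [Fintype V] [DecidableRel G.Adj]
    {s t : Finset V} {d : ℕ} (hconn : G.Connected) (hst : G.IsBipartiteWith s t)
    (hdeg : ∀ v ∈ t, G.degree v ≤ d) : #s + #t ≤ #t * d + 1 := by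
  classical
  have hverts : #s + #t ≤ Fintype.card V := by
    rw [← card_union_of_disjoint (disjoint_coe.1 hst.disjoint)]
    exact card_le_univ _
  have htree : Fintype.card V ≤ #G.edgeFinset + 1 := by
    simpa [edgeFinset_card] using hconn.card_vert_le_card_edgeSet_add_one
  have hedges : #G.edgeFinset ≤ #t * d := by
    rw [← isBipartiteWith_sum_degrees_eq_card_edges' hst]
    exact sum_le_card_nsmul _ _ _ hdeg
  omega

theorem card_component_add_card_component_le [Fintype V] [DecidableRel G.Adj]
    {s t : Finset V} {d : ℕ} (hst : G.IsBipartiteWith s t) (hdeg : ∀ v ∈ t, G.degree v ≤ d)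
    (K : G.ConnectedComponent) [DecidablePred (· ∈ K.supp)] :
    #{v ∈ s | v ∈ K.supp} + #{v ∈ t | v ∈ K.supp} ≤ #{v ∈ t | v ∈ K.supp} * d + 1 := by
  classical
  rw [← card_subtype, ← card_subtype]
  refine card_add_card_le_card_mul_add_one_of_connected K.connected_toSimpleGraph ⟨?_, ?_⟩ ?_
  · rw [disjoint_coe]
    exact disjoint_left.2 fun v hs ht ↦
      disjoint_left.1 (disjoint_coe.1 hst.disjoint) (mem_subtype.1 hs) (mem_subtype.1 ht)
  · intro v w hvw
    simpa using hst.mem_of_adj (v := v.1) (w := w.1) hvw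
  · intro v hv
    have hclosed : G.neighborSet v ⊆ K.supp := fun w hw ↦ K.mem_supp_of_adj_mem_supp v.2 hw
    refine le_trans (le_of_eq ?_) (hdeg v (mem_subtype.1 hv))
    convert! degree_induce_of_neighborSet_subset hclosed

section Kempe

variable (C : G.Coloring α) (i j : α)

/-- The bipartite subgraph formed by the edges joining a vertex of colour `i` to one of colour `j`.
Its components are the Kempe chains, except that the vertices of any third colour appear as isolated
points: keeping the vertex set `V` avoids a subtype. -/
def kempeGraph : SimpleGraph V :=
  G.between (C.colorClass i) (C.colorClass j)

/-- The Kempe change: the colouring obtained by exchanging the colours `i` and `j` on the component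
`K` of the graph they span. -/
def kempeSwap [DecidableEq α] (K : (kempeGraph C i j).ConnectedComponent)
    [DecidablePred (· ∈ K.supp)] : G.Coloring α :=
  Coloring.mk (fun v ↦ if v ∈ K.supp then Equiv.swap i j (C v) else C v) <| by
    have cross {v w : V} (hvw : G.Adj v w) (hv : v ∈ K.supp) (hw : w ∉ K.supp) :
        Equiv.swap i j (C v) ≠ C w := fun heq ↦ by
      have hne := C.valid hvw
      have hadj : (kempeGraph C i j).Adj v w := by
        refine ⟨hvw, ?_⟩
        simp only [Coloring.colorClass, Set.mem_ofPred_eq]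
        grind
      exact hw (K.mem_supp_of_adj_mem_supp hv hadj)
    intro v w hvw
    split_ifs with hv hw hw
    · exact (Equiv.swap i j).injective.ne (C.valid hvw)
    · exact cross hvw hv hw
    · exact (cross hvw.symm hw hv).symm
    · exact C.valid hvw

variable {C i j}

theorem isBipartiteWith_kempeGraph (hij : i ≠ j) :
    (kempeGraph C i j).IsBipartiteWith (C.colorClass i) (C.colorClass j) :=
  between_isBipartiteWith <| Set.disjoint_left.2 fun _ hi hj ↦ hij (hi.symm.trans hj)

theorem IsClawFree.degree_kempeGraph_le_two (hG : IsClawFree G) (hij : i ≠ j) {v : V}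
    [Fintype ((kempeGraph C i j).neighborSet v)] (hv : C v = j) :
    (kempeGraph C i j).degree v ≤ 2 := by
  have hcolor : (kempeGraph C i j).neighborSet v ⊆ C.colorClass i :=
    isBipartiteWith_neighborSet_subset' (isBipartiteWith_kempeGraph hij) hv
  have hadj : (kempeGraph C i j).neighborSet v ⊆ G.neighborSet v := fun _ hw ↦ between_le hw
  rw [← card_neighborFinset_eq_degree, neighborFinset_def]
  rw [← Set.coe_toFinset ((kempeGraph C i j).neighborSet v)] at hcolor hadj
  exact hG.card_le_two hadj ((C.isIndepSet_colorClass i).mono hcolor)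

variable [DecidableEq α]

theorem kempeSwap_apply_of_mem {K : (kempeGraph C i j).ConnectedComponent}
    [DecidablePred (· ∈ K.supp)] {v : V} (hv : v ∈ K.supp) :
    kempeSwap C i j K v = Equiv.swap i j (C v) :=
  if_pos hv

theorem kempeSwap_apply_of_notMem {K : (kempeGraph C i j).ConnectedComponent}
    [DecidablePred (· ∈ K.supp)] {v : V} (hv : v ∉ K.supp) : kempeSwap C i j K v = C v :=
  if_neg hv

variable [Fintype V]

theorem card_kempeSwap_add_card_component (K : (kempeGraph C i j).ConnectedComponent)
    [DecidablePred (· ∈ K.supp)] (k : α) :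
    #{v | kempeSwap C i j K v = k} + #{v | C v = k ∧ v ∈ K.supp} =
      #{v | C v = k} + #{v | C v = Equiv.swap i j k ∧ v ∈ K.supp} := by
  have split (c : V → α) : #{v | c v = k} =
      #{v | c v = k ∧ v ∈ K.supp} + #{v | c v = k ∧ v ∉ K.supp} := by
    rw [← card_filter_add_card_filter_not (· ∈ K.supp), filter_filter, filter_filter]
  have inside : #{v | kempeSwap C i j K v = k ∧ v ∈ K.supp} =
      #{v | C v = Equiv.swap i j k ∧ v ∈ K.supp} := by
    refine congrArg card (filter_congr fun v _ ↦ and_congr_left fun hv ↦ ?_)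
    rw [kempeSwap_apply_of_mem hv, Equiv.swap_apply_eq_iff]
  have outside : #{v | kempeSwap C i j K v = k ∧ v ∉ K.supp} = #{v | C v = k ∧ v ∉ K.supp} := by
    refine congrArg card (filter_congr fun v _ ↦ and_congr_left fun hv ↦ ?_)
    rw [kempeSwap_apply_of_notMem hv]
  rw [split, split C, inside, outside]
  ring

theorem IsClawFree.card_kempe_component_le (hG : IsClawFree G) (hij : i ≠ j)
    (K : (kempeGraph C i j).ConnectedComponent) [DecidablePred (· ∈ K.supp)] :
    #{v | C v = i ∧ v ∈ K.supp} ≤ #{v | C v = j ∧ v ∈ K.supp} + 1 := by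
  classical
  have hbip : (kempeGraph C i j).IsBipartiteWith ({v | C v = i} : Finset V)
      ({v | C v = j} : Finset V) := by
    simpa [Coloring.colorClass] using isBipartiteWith_kempeGraph (C := C) hij
  have hcount := card_component_add_card_component_le hbip
    (fun v hv ↦ hG.degree_kempeGraph_le_two hij (mem_filter.1 hv).2) K
  simp only [filter_filter] at hcount
  omega

theorem IsClawFree.exists_coloring_transfer (hG : IsClawFree G)
    (hlt : #{v | C v = j} < #{v | C v = i}) :
    ∃ C' : G.Coloring α, #{v | C' v = i} + 1 = #{v | C v = i} ∧
      #{v | C' v = j} = #{v | C v = j} + 1 ∧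
      ∀ k, k ≠ i → k ≠ j → #{v | C' v = k} = #{v | C v = k} := by
  classical
  have hij : i ≠ j := by rintro rfl; exact hlt.false
  obtain ⟨K, hK⟩ := exists_card_fiber_lt_of_card_lt (kempeGraph C i j).connectedComponentMk hlt
  simp only [filter_filter, ← ConnectedComponent.mem_supp_iff] at hK
  have hle := hG.card_kempe_component_le hij K
  refine ⟨kempeSwap C i j K, ?_, ?_, fun k hki hkj ↦ ?_⟩
  · have hi := card_kempeSwap_add_card_component K i
    rw [Equiv.swap_apply_left] at hi
    omega
  · have hj := card_kempeSwap_add_card_component K j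
    rw [Equiv.swap_apply_right] at hj
    omega
  · have hk := card_kempeSwap_add_card_component K k
    rw [Equiv.swap_apply_of_ne_of_ne hki hkj] at hk
    omega

end Kempe

theorem IsClawFree.exists_equitable_coloring [Fintype V] [Finite α] [DecidableEq α]
    (hG : IsClawFree G) (C₀ : G.Coloring α) :
    ∃ C : G.Coloring α, (Set.univ : Set α).EquitableOn fun k ↦ #{v | C v = k} := by
  have := Fintype.ofFinite α
  have : Nonempty (G.Coloring α) := ⟨C₀⟩
  obtain ⟨C, hmin⟩ := Finite.exists_min fun C : G.Coloring α ↦ ∑ k, #{v | C v = k} ^ 2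
  refine ⟨C, ?_⟩
  by_contra hne
  obtain ⟨i, -, j, -, hgap⟩ := Set.not_equitableOn.1 hne
  obtain ⟨C', hi, hj, hrest⟩ := hG.exists_coloring_transfer (i := i) (j := j) (C := C) (by omega)
  exact (hmin C').not_gt (sum_sq_lt_of_transfer hgap hi hj hrest)

theorem stmt10_general [Fintype V] [Fintype α] [DecidableEq α] (hG : IsClawFree G)
    (C₀ : G.Coloring α) :
    ∃ C : G.Coloring α,
      (∀ i j, #{v | C v = i} ≤ #{v | C v = j} + 1) ∧
      ∀ i, Fintype.card V / Fintype.card α ≤ #{v | C v = i} ∧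
        #{v | C v = i} ≤ Fintype.card V ⌈/⌉ Fintype.card α := by
  obtain ⟨C, hC⟩ := hG.exists_equitable_coloring C₀
  refine ⟨C, fun i j ↦ hC (Set.mem_univ i) (Set.mem_univ j), fun i ↦ ?_⟩
  have hsum : Fintype.card V = ∑ k, #{v | C v = k} :=
    card_eq_sum_card_fiberwise fun _ _ ↦ mem_coe.2 (mem_univ _)
  rw [← coe_univ] at hC
  rw [hsum, ← card_univ]
  exact ⟨EquitableOn.le hC (mem_univ i), le_sum_ceilDiv_card_of_equitableOn hC (mem_univ i)⟩

end Coloring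

/-- Every finite simple graph of maximal degree at most 2 admits a proper 3-colouring whose
colour classes have sizes pairwise differing by at most 1; equivalently, each colour class
has size between `⌊N/3⌋` and `⌈N/3⌉` where `N` is the number of vertices. -/
theorem stmt10 {V : Type*} [Fintype V] (G : SimpleGraph V) [DecidableRel G.Adj]
    (hdeg : ∀ v, G.degree v ≤ 2) :
    ∃ c : V → Fin 3,
      (∀ v w, G.Adj v w → c v ≠ c w) ∧
      (∀ i j : Fin 3,
        (Finset.univ.filter fun v => c v = i).card
          ≤ (Finset.univ.filter fun v => c v = j).card + 1) ∧
      (∀ i : Fin 3,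
        Fintype.card V / 3 ≤ (Finset.univ.filter fun v => c v = i).card ∧
        (Finset.univ.filter fun v => c v = i).card ≤ (Fintype.card V + 2) / 3) := by
  obtain ⟨C⟩ := colorable_of_forall_degree_lt fun v ↦ Nat.lt_succ_of_le (hdeg v)
  obtain ⟨c, hc⟩ := stmt10_general (isClawFree_of_degree_le_two hdeg) C
  exact ⟨c, fun _ _ ↦ c.valid, by simpa [Nat.ceilDiv_eq_add_pred_div] using hc⟩
end

section
/- Fix H ∈ (0,1) and c > 0, and let φ_c be the localisation function. Then for every real x ≠ 0, ∫₀¹ φ_c(t·x)·(1 − t) dt ≤ (3/2)·c^{1/(2H)}·|x|^{−1}. -/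
/-- The localisation function `φ_c(x) = min(1, c^{3/(2H)} |x|^{-3})`, with the convention
`φ_c(0) = 1`. -/
noncomputable def locFun (H c : ℝ) (x : ℝ) : ℝ :=
  if x = 0 then 1 else min 1 (c ^ ((3 : ℝ) / (2 * H)) * |x| ^ (-3 : ℝ))

/-! The constant `3 / 2` is `∫₀^∞ min(1, u⁻³) du`, the case `p = 3` of
`∫₀^∞ min(1, u⁻ᵖ) du = 1 + 1 / (p - 1) = p / (p - 1)`. Along the ray `t ↦ t x` the function `φ_c`
is this truncated power rescaled by `a = c^{1/(2H)} |x|⁻¹`, so its integral over `(0, ∞)` is exactly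
`(3 / 2) a`; restricting to a bounded interval and inserting a weight at most `1` only decreases
the integral of a nonnegative function. -/

open MeasureTheory Set

section TruncatedPower

variable {a p : ℝ}

theorem eqOn_min_one_div_rpow_Ioc (hp : 0 ≤ p) :
    EqOn (fun t : ℝ => min 1 ((a / t) ^ p)) (fun _ => 1) (Ioc 0 a) := fun _ ht =>
  min_eq_left (Real.one_le_rpow ((one_le_div ht.1).2 ht.2) hp)

theorem eqOn_min_one_div_rpow_Ioi (ha : 0 ≤ a) (hp : 0 ≤ p) :
    EqOn (fun t : ℝ => min 1 ((a / t) ^ p)) (fun t => a ^ p * t ^ (-p)) (Ioi a) := by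
  intro t (hat : a < t)
  have ht : 0 < t := ha.trans_lt hat
  have h_le_one : (a / t) ^ p ≤ 1 :=
    Real.rpow_le_one (div_nonneg ha ht.le) ((div_le_one ht).2 hat.le) hp
  change min 1 ((a / t) ^ p) = a ^ p * t ^ (-p)
  rw [min_eq_right h_le_one, Real.div_rpow ha ht.le, Real.rpow_neg ht.le, div_eq_mul_inv]

theorem integrableOn_Ioc_min_one_div_rpow (hp : 0 ≤ p) :
    IntegrableOn (fun t : ℝ => min 1 ((a / t) ^ p)) (Ioc 0 a) :=
  (integrableOn_const (by simp)).congr_fun (eqOn_min_one_div_rpow_Ioc hp).symm measurableSet_Ioc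

theorem integrableOn_Ioi_self_min_one_div_rpow (ha : 0 < a) (hp : 1 < p) :
    IntegrableOn (fun t : ℝ => min 1 ((a / t) ^ p)) (Ioi a) :=
  IntegrableOn.congr_fun ((integrableOn_Ioi_rpow_of_lt (neg_lt_neg hp) ha).const_mul (a ^ p))
    (eqOn_min_one_div_rpow_Ioi ha.le (by linarith)).symm measurableSet_Ioi

theorem integrableOn_Ioi_min_one_div_rpow (ha : 0 < a) (hp : 1 < p) :
    IntegrableOn (fun t : ℝ => min 1 ((a / t) ^ p)) (Ioi 0) := by
  rw [← Ioc_union_Ioi_eq_Ioi ha.le]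
  exact (integrableOn_Ioc_min_one_div_rpow (by linarith)).union
    (integrableOn_Ioi_self_min_one_div_rpow ha hp)

theorem integral_Ioc_min_one_div_rpow (ha : 0 ≤ a) (hp : 0 ≤ p) :
    ∫ t in Ioc 0 a, min 1 ((a / t) ^ p) = a := by
  rw [setIntegral_congr_fun measurableSet_Ioc (eqOn_min_one_div_rpow_Ioc hp)]
  simp [ha]

theorem integral_Ioi_self_min_one_div_rpow (ha : 0 < a) (hp : 1 < p) :
    ∫ t in Ioi a, min 1 ((a / t) ^ p) = a / (p - 1) := by
  have h_rpow : a ^ p * a ^ (-p + 1) = a := by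
    rw [← Real.rpow_add ha, add_neg_cancel_left, Real.rpow_one]
  calc ∫ t in Ioi a, min 1 ((a / t) ^ p)
      = a ^ p * ∫ t in Ioi a, t ^ (-p) := by
        rw [setIntegral_congr_fun measurableSet_Ioi
          (eqOn_min_one_div_rpow_Ioi ha.le (by linarith)), integral_const_mul]
    _ = a ^ p * (-a ^ (-p + 1) / (-p + 1)) := by
        rw [integral_Ioi_rpow_of_lt (neg_lt_neg hp) ha]
    _ = a / (p - 1) := by
        rw [← mul_div_assoc, mul_neg, h_rpow, neg_add_eq_sub, ← neg_sub p 1, neg_div_neg_eq]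

theorem integral_Ioi_min_one_div_rpow (ha : 0 < a) (hp : 1 < p) :
    ∫ t in Ioi 0, min 1 ((a / t) ^ p) = p / (p - 1) * a := by
  have hp0 : 0 ≤ p := by linarith
  have hp1 : p - 1 ≠ 0 := by linarith
  rw [← Ioc_union_Ioi_eq_Ioi ha.le,
    setIntegral_union (Ioc_disjoint_Ioi le_rfl) measurableSet_Ioi
      (integrableOn_Ioc_min_one_div_rpow hp0) (integrableOn_Ioi_self_min_one_div_rpow ha hp),
    integral_Ioc_min_one_div_rpow ha.le hp0, integral_Ioi_self_min_one_div_rpow ha hp]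
  field_simp
  ring

end TruncatedPower

theorem intervalIntegral_mul_le_integral_Ioi {f w : ℝ → ℝ} {a b : ℝ} (hab : a ≤ b)
    (hf : IntegrableOn f (Ioi a)) (hf_nonneg : ∀ t ∈ Ioi a, 0 ≤ f t)
    (hfw : IntervalIntegrable (fun t => f t * w t) volume a b) (hw : ∀ t ∈ Ioc a b, w t ≤ 1) :
    ∫ t in a..b, f t * w t ≤ ∫ t in Ioi a, f t := by
  rw [intervalIntegral.integral_of_le hab]
  calc ∫ t in Ioc a b, f t * w t
      ≤ ∫ t in Ioc a b, f t :=
        setIntegral_mono_on hfw.1 (hf.mono_set Ioc_subset_Ioi_self) measurableSet_Ioc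
          fun t ht => mul_le_of_le_one_right (hf_nonneg t ht.1) (hw t ht)
    _ ≤ ∫ t in Ioi a, f t :=
        setIntegral_mono_set hf (ae_restrict_of_forall_mem measurableSet_Ioi hf_nonneg)
          Ioc_subset_Ioi_self.eventuallyLE

section LocFun

variable {H c x : ℝ}

theorem locFun_nonneg (hc : 0 ≤ c) (y : ℝ) : 0 ≤ locFun H c y := by
  unfold locFun
  split_ifs <;> positivity

theorem locFun_le_one (y : ℝ) : locFun H c y ≤ 1 := by
  unfold locFun
  split_ifs
  · exact le_rfl
  · exact min_le_left _ _

theorem locFun_eq_min_one_div_rpow (hc : 0 ≤ c) (hx : x ≠ 0) :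
    locFun H c x = min 1 ((c ^ (1 / (2 * H)) / |x|) ^ (3 : ℝ)) := by
  have h_rpow : c ^ (3 / (2 * H)) = (c ^ (1 / (2 * H))) ^ (3 : ℝ) := by
    rw [← Real.rpow_mul hc, one_div_mul_eq_div]
  rw [locFun, if_neg hx, h_rpow, Real.rpow_neg (abs_nonneg x), ← div_eq_mul_inv,
    Real.div_rpow (by positivity) (abs_nonneg x)]

theorem eqOn_locFun_mul_Ioi (hc : 0 ≤ c) (hx : x ≠ 0) :
    EqOn (fun t => locFun H c (t * x))
      (fun t => min 1 ((c ^ (1 / (2 * H)) * |x|⁻¹ / t) ^ (3 : ℝ))) (Ioi 0) := by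
  intro t (ht : 0 < t)
  change locFun H c (t * x) = min 1 ((c ^ (1 / (2 * H)) * |x|⁻¹ / t) ^ (3 : ℝ))
  rw [locFun_eq_min_one_div_rpow hc (mul_ne_zero ht.ne' hx), abs_mul, abs_of_pos ht,
    ← div_eq_mul_inv, div_div, mul_comm t]

theorem integrableOn_Ioi_locFun_mul (hc : 0 < c) (hx : x ≠ 0) :
    IntegrableOn (fun t => locFun H c (t * x)) (Ioi 0) :=
  (integrableOn_Ioi_min_one_div_rpow (by positivity) (by norm_num)).congr_fun
    (eqOn_locFun_mul_Ioi hc.le hx).symm measurableSet_Ioi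

theorem integral_Ioi_locFun_mul (hc : 0 < c) (hx : x ≠ 0) :
    ∫ t in Ioi 0, locFun H c (t * x) = 3 / 2 * c ^ (1 / (2 * H)) * |x|⁻¹ := by
  rw [setIntegral_congr_fun measurableSet_Ioi (eqOn_locFun_mul_Ioi hc.le hx),
    integral_Ioi_min_one_div_rpow (by positivity) (by norm_num)]
  ring

theorem intervalIntegrable_locFun_mul_mul {w : ℝ → ℝ} {b : ℝ} (hc : 0 < c) (hx : x ≠ 0)
    (hb : 0 ≤ b) (hw : IntervalIntegrable w volume 0 b) :
    IntervalIntegrable (fun t => locFun H c (t * x) * w t) volume 0 b := by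
  rw [intervalIntegrable_iff_integrableOn_Ioc_of_le hb] at hw ⊢
  have h_meas : AEStronglyMeasurable (fun t => locFun H c (t * x)) (volume.restrict (Ioc 0 b)) :=
    ((integrableOn_Ioi_locFun_mul hc hx).mono_set Ioc_subset_Ioi_self).aestronglyMeasurable
  refine hw.bdd_mul (c := 1) h_meas (.of_forall fun t => ?_)
  rw [Real.norm_of_nonneg (locFun_nonneg hc.le _)]
  exact locFun_le_one _

theorem stmt14_general {w : ℝ → ℝ} {b : ℝ} (_hH : H ≠ 0) (hc : 0 < c) (hx : x ≠ 0) (hb : 0 ≤ b)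
    (hw : IntervalIntegrable w volume 0 b) (hw_le : ∀ t ∈ Ioc 0 b, w t ≤ 1) :
    ∫ t in 0..b, locFun H c (t * x) * w t ≤ 3 / 2 * c ^ (1 / (2 * H)) * |x|⁻¹ :=
  calc ∫ t in 0..b, locFun H c (t * x) * w t
      ≤ ∫ t in Ioi 0, locFun H c (t * x) :=
        intervalIntegral_mul_le_integral_Ioi hb (integrableOn_Ioi_locFun_mul hc hx)
          (fun _ _ => locFun_nonneg hc.le _) (intervalIntegrable_locFun_mul_mul hc hx hb hw) hw_le
    _ = 3 / 2 * c ^ (1 / (2 * H)) * |x|⁻¹ := integral_Ioi_locFun_mul hc hx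

end LocFun

/-- For `H ∈ (0,1)`, `c > 0` and `x ≠ 0`,
`∫₀¹ φ_c(t x) (1 - t) dt ≤ (3/2) c^{1/(2H)} |x|⁻¹`. -/
theorem stmt14 (H c : ℝ) (hH0 : 0 < H) (hH1 : H < 1) (hc : 0 < c) (x : ℝ) (hx : x ≠ 0) :
    ∫ t in (0 : ℝ)..1, locFun H c (t * x) * (1 - t)
      ≤ (3 / 2) * c ^ ((1 : ℝ) / (2 * H)) * |x|⁻¹ :=
  stmt14_general hH0.ne' hc hx zero_le_one
    (Continuous.intervalIntegrable (by fun_prop) 0 1) fun _ ht => sub_le_self 1 ht.1.le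
end

section
/- For every H ∈ (0,1), ∫₀¹ ∫₀¹ |t − s|^{2H}·(1 − 2t)·(1 − 2s) dt ds = −H/(2 + 7H + 7H² + 2H³). -/
/-! A kernel that depends only on `|t - s|` meets a weight `φ` only through the autocorrelation
`u ↦ ∫ φ (u + s) φ s ds`: substituting `t = u + s` turns the double integral into a single
integral over the lag `u`, and evenness in `u` folds it onto `u > 0`. The weight `1 - 2 * t` on
`[0, 1]` has autocorrelation `1 / 3 - u + 2 / 3 * u ^ 3`, so three moments of `u ^ (2 * H)`
remain. -/

open MeasureTheory Set

theorem setIntegral_setIntegral_mul_mul {α β : Type*} [MeasurableSpace α] [MeasurableSpace β]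
    {μ : Measure α} {ν : Measure β} (κ : α → β → ℝ) (φ : α → ℝ) (ψ : β → ℝ) {S : Set α} {T : Set β}
    (hS : MeasurableSet S) (hT : MeasurableSet T) :
    ∫ t in S, ∫ s in T, κ t s * (φ t * ψ s) ∂ν ∂μ =
      ∫ t, ∫ s, κ t s * (S.indicator φ t * T.indicator ψ s) ∂ν ∂μ := by
  simp only [← integral_indicator hS, ← integral_indicator hT]
  congr 1 with t
  by_cases ht : t ∈ S
  · simp only [indicator_of_mem ht, indicator_mul_right]
  · simp only [indicator_of_notMem ht, zero_mul, mul_zero, integral_zero]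

theorem integrable_comp_abs {E : Type*} [NormedAddCommGroup E] {f : ℝ → E}
    (hf : IntegrableOn f (Ioi 0)) : Integrable fun x ↦ f |x| := by
  have hg : Integrable ((Ioi 0).indicator f) := hf.integrable_indicator measurableSet_Ioi
  refine (hg.add hg.comp_neg).congr ?_
  filter_upwards [Measure.ae_ne volume (0 : ℝ)] with x hx
  rcases hx.lt_or_gt with h | h
  · simp [h, h.le, abs_of_neg]
  · simp [h, h.le, abs_of_pos]

section Shear

variable {G E : Type*} [AddGroup G] [MeasurableSpace G] [MeasurableAdd₂ G]
  {μ : Measure G} [SFinite μ] [μ.IsAddRightInvariant]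
  [NormedAddCommGroup E] [NormedSpace ℝ E]

theorem integral_integral_eq_integral_integral_add_right {F : G → G → E}
    (hF : Integrable (Function.uncurry F) (μ.prod μ)) :
    ∫ t, ∫ s, F t s ∂μ ∂μ = ∫ u, ∫ s, F (u + s) s ∂μ ∂μ := by
  have hshear := measurePreserving_add_prod μ μ
  calc ∫ t, ∫ s, F t s ∂μ ∂μ
      = ∫ p, Function.uncurry F p ∂μ.prod μ := integral_integral hF
    _ = ∫ p : G × G, Function.uncurry F (p.1 + p.2, p.2) ∂μ.prod μ := by
      have hF' := hF.aestronglyMeasurable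
      rw [← hshear.map_eq] at hF'
      rw [← integral_map hshear.aemeasurable hF', hshear.map_eq]
    _ = ∫ u, ∫ s, F (u + s) s ∂μ ∂μ :=
      integral_prod _ (hshear.integrable_comp_of_integrable hF)

theorem integrable_comp_sub_mul_mul [MeasurableNeg G] {k φ ψ : G → ℝ} {C : ℝ}
    (hk : Integrable k μ) (hφ : AEStronglyMeasurable φ μ) (hC : ∀ᵐ x ∂μ, ‖φ x‖ ≤ C)
    (hψ : Integrable ψ μ) :
    Integrable (Function.uncurry fun t s ↦ k (t - s) * (φ t * ψ s)) (μ.prod μ) := by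
  have hconv : Integrable (fun p : G × G ↦ ψ p.2 * k (p.1 - p.2)) (μ.prod μ) :=
    hψ.convolution_integrand (ContinuousLinearMap.mul ℝ ℝ) hk
  refine (hconv.bdd_mul hφ.comp_fst (Measure.quasiMeasurePreserving_fst.ae hC)).congr
    (.of_forall fun p ↦ ?_)
  simp only [Function.uncurry]
  ring

end Shear

section Autocorrelation

/-- The autocorrelation `u ↦ ∫ φ (u + s) φ s ds` of a real function on the line: what an
integral kernel in `t - s` sees of the weight `φ t * φ s`. A weight on a bounded interval is
encoded by extending it by zero. -/
noncomputable def autocorrelation (φ : ℝ → ℝ) (u : ℝ) : ℝ :=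
  ∫ s, φ (u + s) * φ s

theorem autocorrelation_neg (φ : ℝ → ℝ) (u : ℝ) :
    autocorrelation φ (-u) = autocorrelation φ u := by
  unfold autocorrelation
  rw [← integral_add_left_eq_self (fun s ↦ φ (-u + s) * φ s) u]
  simp only [neg_add_cancel_left, mul_comm]

theorem autocorrelation_abs (φ : ℝ → ℝ) (u : ℝ) :
    autocorrelation φ |u| = autocorrelation φ u := by
  rcases abs_choice u with h | h <;> simp only [h, autocorrelation_neg]

theorem autocorrelation_indicator_Ioc {φ : ℝ → ℝ} {L u : ℝ} (hu : u ∈ Icc 0 L) :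
    autocorrelation ((Ioc 0 L).indicator φ) u = ∫ s in 0..L - u, φ (u + s) * φ s := by
  rw [intervalIntegral.integral_of_le (sub_nonneg.2 hu.2), ← integral_indicator measurableSet_Ioc]
  refine integral_congr_ae (.of_forall fun s ↦ ?_)
  have hoverlap : s ∈ Ioc 0 (L - u) ↔ u + s ∈ Ioc 0 L ∧ s ∈ Ioc 0 L := by
    grind
  by_cases hs : s ∈ Ioc 0 L <;> by_cases hus : u + s ∈ Ioc 0 L <;>
    simp only [indicator, hoverlap, hs, hus, and_true, and_false, and_self, if_true, if_false,
      mul_zero, zero_mul]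

variable {k φ : ℝ → ℝ} {L C : ℝ}

theorem integral_integral_comp_abs_sub_mul_mul (hk : IntegrableOn k (Ioi 0)) (hφ : Integrable φ)
    (hC : ∀ᵐ x, ‖φ x‖ ≤ C) :
    ∫ t, ∫ s, k |t - s| * (φ t * φ s) = 2 * ∫ u in Ioi 0, k u * autocorrelation φ u := by
  calc ∫ t, ∫ s, k |t - s| * (φ t * φ s)
      = ∫ u, ∫ s, k |u + s - s| * (φ (u + s) * φ s) :=
        integral_integral_eq_integral_integral_add_right
          (integrable_comp_sub_mul_mul (integrable_comp_abs hk) hφ.aestronglyMeasurable hC hφ)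
    _ = ∫ u, k |u| * autocorrelation φ |u| := by
        simp only [autocorrelation_abs]
        simp only [add_sub_cancel_right, integral_const_mul, autocorrelation]
    _ = 2 * ∫ u in Ioi 0, k u * autocorrelation φ u :=
        integral_comp_abs (f := fun u ↦ k u * autocorrelation φ u)

theorem intervalIntegral_intervalIntegral_comp_abs_sub_mul_mul (hL : 0 ≤ L)
    (hk : IntervalIntegrable k volume 0 L) (hφ : ContinuousOn φ (Icc 0 L)) :
    ∫ t in 0..L, ∫ s in 0..L, k |t - s| * (φ t * φ s) =
      2 * ∫ u in 0..L, k u * ∫ s in 0..L - u, φ (u + s) * φ s := by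
  set K := (Icc 0 L).indicator k with hK
  set Φ := (Ioc 0 L).indicator φ with hΦ
  have hK_int : IntegrableOn K (Ioi 0) := by
    refine Integrable.integrableOn ?_
    rwa [hK, integrable_indicator_iff measurableSet_Icc, integrableOn_Icc_iff_integrableOn_Ioc,
      ← intervalIntegrable_iff_integrableOn_Ioc_of_le hL]
  have hΦ_int : Integrable Φ :=
    (hφ.integrableOn_Icc.mono_set Ioc_subset_Icc_self).integrable_indicator measurableSet_Ioc
  obtain ⟨C, hC⟩ := isCompact_Icc.exists_bound_of_continuousOn hφ
  have hΦ_bound (x : ℝ) : ‖Φ x‖ ≤ max C 0 := by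
    by_cases hx : x ∈ Ioc 0 L
    · simpa [hΦ, hx] using Or.inl (hC x (Ioc_subset_Icc_self hx))
    · simp [hΦ, hx]
  have hleft : ∫ t in 0..L, ∫ s in 0..L, k |t - s| * (φ t * φ s) =
      ∫ t, ∫ s, K |t - s| * (Φ t * Φ s) := by
    simp only [intervalIntegral.integral_of_le hL]
    rw [← setIntegral_setIntegral_mul_mul (fun t s ↦ K |t - s|) φ φ measurableSet_Ioc
      measurableSet_Ioc]
    refine setIntegral_congr_fun measurableSet_Ioc fun t ht ↦
      setIntegral_congr_fun measurableSet_Ioc fun s hs ↦ ?_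
    have hlag : |t - s| ∈ Icc 0 L := by grind
    simp only [hK, indicator_of_mem hlag]
  have hright : ∫ u in Ioi 0, K u * autocorrelation Φ u =
      ∫ u in 0..L, k u * ∫ s in 0..L - u, φ (u + s) * φ s := by
    have hlags : Ioi 0 ∩ Icc 0 L = Ioc 0 L := by grind
    simp only [hK, ← indicator_mul_left]
    rw [setIntegral_indicator measurableSet_Icc, hlags, intervalIntegral.integral_of_le hL]
    refine setIntegral_congr_fun measurableSet_Ioc fun u hu ↦ ?_
    simp only [hΦ, autocorrelation_indicator_Ioc (Ioc_subset_Icc_self hu)]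
  rw [hleft, integral_integral_comp_abs_sub_mul_mul hK_int hΦ_int (.of_forall hΦ_bound), hright]

end Autocorrelation

theorem integral_rpow_mul_pow {a x : ℝ} (ha : -1 < a) (hx : 0 ≤ x) (n : ℕ) :
    ∫ u in 0..x, u ^ a * u ^ n = x ^ (a + n + 1) / (a + n + 1) := by
  have han : -1 < a + n := by linarith [n.cast_nonneg (α := ℝ)]
  calc ∫ u in 0..x, u ^ a * u ^ n
      = ∫ u in 0..x, u ^ (a + n) :=
        intervalIntegral.integral_congr_Ioo_of_le hx fun u hu ↦
          (Real.rpow_add_natCast hu.1.ne' a n).symm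
    _ = x ^ (a + n + 1) / (a + n + 1) := by
        rw [integral_rpow (.inl han), Real.zero_rpow (by linarith), sub_zero]

theorem integral_one_sub_two_mul_add_mul (u : ℝ) :
    ∫ s in 0..1 - u, (1 - 2 * (u + s)) * (1 - 2 * s) = 1 / 3 - u + 2 / 3 * u ^ 3 := by
  have hexpand (s : ℝ) : (1 - 2 * (u + s)) * (1 - 2 * s) =
      (1 - 2 * u) - 4 * (1 - u) * s + 4 * s ^ 2 := by ring
  simp only [hexpand]
  rw [intervalIntegral.integral_add (Continuous.intervalIntegrable (by fun_prop) _ _)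
      (Continuous.intervalIntegrable (by fun_prop) _ _),
    intervalIntegral.integral_sub (Continuous.intervalIntegrable (by fun_prop) _ _)
      (Continuous.intervalIntegrable (by fun_prop) _ _),
    intervalIntegral.integral_const, intervalIntegral.integral_const_mul,
    intervalIntegral.integral_const_mul, integral_id, integral_pow, smul_eq_mul]
  push_cast
  ring

theorem integral_rpow_mul_cubic {a : ℝ} (ha : -1 < a) :
    ∫ u in (0 : ℝ)..1, u ^ a * (1 / 3 - u + 2 / 3 * u ^ 3) =
      1 / 3 * (1 / (a + 1)) - 1 / (a + 2) + 2 / 3 * (1 / (a + 4)) := by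
  have hmoment (n : ℕ) : ∫ u in (0 : ℝ)..1, u ^ a * u ^ n = 1 / (a + n + 1) := by
    rw [integral_rpow_mul_pow ha zero_le_one, Real.one_rpow]
  have hint (n : ℕ) : IntervalIntegrable (fun u : ℝ ↦ u ^ a * u ^ n) volume 0 1 :=
    (intervalIntegral.intervalIntegrable_rpow' ha).mul_continuousOn (by fun_prop)
  calc ∫ u in (0 : ℝ)..1, u ^ a * (1 / 3 - u + 2 / 3 * u ^ 3)
      = ∫ u in (0 : ℝ)..1,
          (1 / 3 * (u ^ a * u ^ 0) - u ^ a * u ^ 1 + 2 / 3 * (u ^ a * u ^ 3)) := by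
        congr 1 with u
        ring
    _ = 1 / 3 * (1 / (a + (0 : ℕ) + 1)) - 1 / (a + (1 : ℕ) + 1)
          + 2 / 3 * (1 / (a + (3 : ℕ) + 1)) := by
        rw [intervalIntegral.integral_add (((hint 0).const_mul _).sub (hint 1))
            ((hint 3).const_mul _),
          intervalIntegral.integral_sub ((hint 0).const_mul _) (hint 1)]
        simp only [intervalIntegral.integral_const_mul, hmoment]
    _ = 1 / 3 * (1 / (a + 1)) - 1 / (a + 2) + 2 / 3 * (1 / (a + 4)) := by
        norm_num [add_assoc]

theorem stmt16_general (H : ℝ) (hH : -1 / 2 < H) :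
    ∫ t in (0 : ℝ)..1, ∫ s in (0 : ℝ)..1, |t - s| ^ (2 * H) * ((1 - 2 * t) * (1 - 2 * s))
      = -H / (2 + 7 * H + 7 * H ^ 2 + 2 * H ^ 3) := by
  have ha : -1 < 2 * H := by linarith
  rw [intervalIntegral_intervalIntegral_comp_abs_sub_mul_mul (k := fun u ↦ u ^ (2 * H))
    (φ := fun t ↦ 1 - 2 * t) zero_le_one (intervalIntegral.intervalIntegrable_rpow' ha)
    (by fun_prop)]
  simp only [integral_one_sub_two_mul_add_mul, integral_rpow_mul_cubic ha]
  have hfactor : 2 + 7 * H + 7 * H ^ 2 + 2 * H ^ 3 = (2 * H + 1) * (H + 1) * (H + 2) := by ring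
  have h₁ : 2 * H + 1 ≠ 0 := by linarith
  have h₂ : H + 1 ≠ 0 := by linarith
  have h₃ : H + 2 ≠ 0 := by linarith
  rw [hfactor, show 2 * H + 2 = 2 * (H + 1) by ring, show 2 * H + 4 = 2 * (H + 2) by ring]
  field_simp
  ring

/-- For every `H ∈ (0,1)`,
`∫₀¹ ∫₀¹ |t - s|^{2H} (1 - 2t)(1 - 2s) dt ds = -H/(2 + 7H + 7H² + 2H³)`. -/
theorem stmt16 (H : ℝ) (hH0 : 0 < H) (hH1 : H < 1) :
    ∫ t in (0 : ℝ)..1, ∫ s in (0 : ℝ)..1, |t - s| ^ (2 * H) * ((1 - 2 * t) * (1 - 2 * s))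
      = -H / (2 + 7 * H + 7 * H ^ 2 + 2 * H ^ 3) :=
  stmt16_general H (by linarith)
end

section
/- Let φ(a) = e^{−a²/2}/√(2π) denote the standard normal density and Φ the standard normal cumulative distribution function. Then the function a ↦ a·φ(a)/Φ(−a) is strictly increasing on (0, ∞); consequently, for every β > 0 the equation 2·Φ(−a) = β·a·φ(a) has exactly one solution a in (0, ∞). -/
open MeasureTheory

/-- The standard normal density `φ(a) = e^{-a²/2} / √(2π)`. -/
noncomputable def stdGaussPDF (a : ℝ) : ℝ := Real.exp (-a ^ 2 / 2) / Real.sqrt (2 * Real.pi)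

/-- The standard normal cumulative distribution function `Φ(x) = ∫_{-∞}^x φ(u) du`. -/
noncomputable def stdGaussCDF (x : ℝ) : ℝ := ∫ u in Set.Iic x, stdGaussPDF u

/-! Log-concavity of `f` makes `f (b + t) / f b` decrease in `b` for each `t ≥ 0`; integrating over
`t` shows that `(∫ u in Ioi b, f u) / f b` decreases, i.e. that its inverse, the hazard rate `h`,
increases. Hence `x * h x` is strictly increasing from `0` to `∞` on the positive half-line. By
symmetry `Φ(-a)` is the upper tail of the log-concave density `φ`, and `2 Φ(-a) = β a φ(a)` says
that `a * h a = 2 / β`. -/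

open Set Filter Topology Real

theorem add_le_add_swap_weights_of_concaveOn {𝕜 E β : Type*} [Semiring 𝕜] [PartialOrder 𝕜]
    [AddCommMonoid E] [SMul 𝕜 E] [AddCommMonoid β] [PartialOrder β] [IsOrderedAddMonoid β]
    [Module 𝕜 β] {s : Set E} {g : E → β} (hg : ConcaveOn 𝕜 s g) {x y : E} (hx : x ∈ s)
    (hy : y ∈ s) {p q : 𝕜} (hp : 0 ≤ p) (hq : 0 ≤ q) (hpq : p + q = 1) :
    g x + g y ≤ g (p • x + q • y) + g (q • x + p • y) :=
  calc g x + g y = (p + q) • g x + (p + q) • g y := by rw [hpq, one_smul, one_smul]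
    _ = (p • g x + q • g y) + (q • g x + p • g y) := by simp only [add_smul]; abel
    _ ≤ g (p • x + q • y) + g (q • x + p • y) :=
      add_le_add (hg.2 hx hy hp hq hpq) (hg.2 hx hy hq hp ((add_comm q p).trans hpq))

/-- A strictly positive log-concave function on `s`. Positivity is part of the notion because
`Real.log` is not `-∞` at `0`; log-concave functions with zeros are restricted to their support. -/
structure LogConcaveOn {E : Type*} [AddCommMonoid E] [SMul ℝ E] (s : Set E) (f : E → ℝ) :
    Prop where
  pos : ∀ x ∈ s, 0 < f x
  concaveOn_log : ConcaveOn ℝ s fun x => log (f x)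

namespace LogConcaveOn

theorem subset {E : Type*} [AddCommMonoid E] [SMul ℝ E] {s t : Set E} {f : E → ℝ}
    (hf : LogConcaveOn t f) (hst : s ⊆ t) (hs : Convex ℝ s) : LogConcaveOn s f :=
  ⟨fun x hx => hf.pos x (hst hx), hf.concaveOn_log.subset hst hs⟩

theorem continuousOn {E : Type*} [NormedAddCommGroup E] [NormedSpace ℝ E] [FiniteDimensional ℝ E]
    {s : Set E} {f : E → ℝ} (hf : LogConcaveOn s f) (hs : IsOpen s) : ContinuousOn f s :=
  (hf.concaveOn_log.continuousOn hs).rexp.congr fun x hx => (exp_log (hf.pos x hx)).symm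

theorem mul_le_mul_swap_weights {E : Type*} [AddCommMonoid E] [SMul ℝ E] {s : Set E} {f : E → ℝ}
    (hf : LogConcaveOn s f) {x y : E} (hx : x ∈ s) (hy : y ∈ s) {p q : ℝ} (hp : 0 ≤ p)
    (hq : 0 ≤ q) (hpq : p + q = 1) : f x * f y ≤ f (p • x + q • y) * f (q • x + p • y) := by
  have hfx := hf.pos x hx
  have hfy := hf.pos y hy
  have hfpq := hf.pos _ (hf.concaveOn_log.1 hx hy hp hq hpq)
  have hfqp := hf.pos _ (hf.concaveOn_log.1 hx hy hq hp ((add_comm q p).trans hpq))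
  rw [← log_le_log_iff (mul_pos hfx hfy) (mul_pos hfpq hfqp), log_mul hfx.ne' hfy.ne',
    log_mul hfpq.ne' hfqp.ne']
  exact add_le_add_swap_weights_of_concaveOn hf.concaveOn_log hx hy hp hq hpq

theorem mul_add_le_add_mul {s : Set ℝ} {f : ℝ → ℝ} (hf : LogConcaveOn s f) {x y t : ℝ}
    (hx : x ∈ s) (hyt : y + t ∈ s) (hxy : x ≤ y) (ht : 0 ≤ t) :
    f x * f (y + t) ≤ f (x + t) * f y := by
  obtain ⟨p, q, hp, hq, hpq, hxt⟩ : x + t ∈ segment ℝ x (y + t) := by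
    rw [segment_eq_Icc (by linarith)]
    constructor <;> linarith
  have hy : q • x + p • (y + t) = y := by
    simp only [smul_eq_mul] at hxt ⊢
    linear_combination (x + y + t) * hpq - hxt
  simpa only [hxt, hy] using hf.mul_le_mul_swap_weights hx hyt hp hq hpq

end LogConcaveOn

theorem setIntegral_pos_of_forall_pos {α : Type*} [MeasurableSpace α] {μ : Measure α} {s : Set α}
    {f : α → ℝ} (hs : MeasurableSet s) (hμs : μ s ≠ 0) (hint : IntegrableOn f s μ)
    (hpos : ∀ x ∈ s, 0 < f x) : 0 < ∫ x in s, f x ∂μ := by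
  rw [setIntegral_pos_iff_support_of_nonneg_ae
    (ae_restrict_of_forall_mem hs fun x hx => (hpos x hx).le) hint,
    inter_eq_right.2 fun x hx => Function.mem_support.2 (hpos x hx).ne']
  exact pos_iff_ne_zero.2 hμs

theorem integral_Ioi_comp_add_left {E : Type*} [NormedAddCommGroup E] [NormedSpace ℝ E]
    (f : ℝ → E) (a : ℝ) : ∫ t in Ioi 0, f (a + t) = ∫ u in Ioi a, f u := by
  simpa using (measurePreserving_add_left volume a).setIntegral_preimage_emb
    (measurableEmbedding_addLeft a) f (Ioi a)

theorem integrableOn_Ioi_comp_add_left_iff {E : Type*} [NormedAddCommGroup E] (f : ℝ → E) (a : ℝ) :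
    IntegrableOn (fun t => f (a + t)) (Ioi 0) ↔ IntegrableOn f (Ioi a) := by
  simpa [Function.comp_def] using
    (measurePreserving_add_left volume a).integrableOn_comp_preimage
      (measurableEmbedding_addLeft a) (f := f) (s := Ioi a)

section IdMul

variable {𝕜 : Type*} [Field 𝕜] [LinearOrder 𝕜] [IsStrictOrderedRing 𝕜] {h : 𝕜 → 𝕜}

theorem strictMonoOn_id_mul (hpos : ∀ x ∈ Ioi 0, 0 < h x) (hmono : MonotoneOn h (Ioi 0)) :
    StrictMonoOn (fun x => x * h x) (Ioi 0) := fun x hx _ hy hxy =>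
  mul_lt_mul hxy (hmono hx hy hxy.le) (hpos x hx) (le_of_lt hy)

theorem tendsto_id_mul_nhdsGT_zero [TopologicalSpace 𝕜] [OrderTopology 𝕜]
    (hpos : ∀ x ∈ Ioi 0, 0 < h x) (hmono : MonotoneOn h (Ioi 0)) :
    Tendsto (fun x => x * h x) (𝓝[>] 0) (𝓝 0) := by
  have hupper : Tendsto (fun x => x * h 1) (𝓝[>] 0) (𝓝 0) :=
    ((continuous_mul_const (h 1)).tendsto' 0 0 (zero_mul _)).mono_left nhdsWithin_le_nhds
  refine tendsto_of_tendsto_of_tendsto_of_le_of_le' tendsto_const_nhds hupper ?_ ?_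
  · filter_upwards [self_mem_nhdsWithin] with x hx using (mul_pos hx (hpos x hx)).le
  · filter_upwards [Ioo_mem_nhdsGT zero_lt_one] with x hx
    exact mul_le_mul_of_nonneg_left (hmono hx.1 (mem_Ioi.2 one_pos) hx.2.le) hx.1.le

theorem tendsto_id_mul_atTop (hpos : ∀ x ∈ Ioi 0, 0 < h x) (hmono : MonotoneOn h (Ioi 0)) :
    Tendsto (fun x => x * h x) atTop atTop := by
  refine tendsto_atTop_mono' atTop ?_ (tendsto_id.atTop_mul_const (hpos 1 (mem_Ioi.2 one_pos)))
  filter_upwards [eventually_ge_atTop 1] with x hx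
  have hx₀ : 0 < x := one_pos.trans_le hx
  exact mul_le_mul_of_nonneg_left (hmono (mem_Ioi.2 one_pos) hx₀ hx) hx₀.le

theorem bijOn_id_mul {h : ℝ → ℝ} (hpos : ∀ x ∈ Ioi 0, 0 < h x)
    (hmono : MonotoneOn h (Ioi 0)) (hcont : ContinuousOn h (Ioi 0)) :
    BijOn (fun x => x * h x) (Ioi 0) (Ioi 0) :=
  ⟨fun x hx => mul_pos hx (hpos x hx), (strictMonoOn_id_mul hpos hmono).injOn,
    isPreconnected_Ioi.intermediate_value_Ioi (l₁ := 𝓝[>] 0) inf_le_right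
      (le_principal_iff.2 (Ioi_mem_atTop 0)) (continuousOn_id.mul hcont)
      (tendsto_id_mul_nhdsGT_zero hpos hmono) (tendsto_id_mul_atTop hpos hmono)⟩

end IdMul

/-- The hazard rate (or inverse Mills ratio) at `x` of a distribution on `ℝ` with density `f`: the
density at `x` conditional on exceeding `x`. Scaling `f` does not change it, so `f` need not be
normalised; it is `0` by convention where `f` is not integrable on `Ioi x`. -/
noncomputable def hazardRate (f : ℝ → ℝ) (x : ℝ) : ℝ := f x / ∫ u in Ioi x, f u

section HazardRate

variable {f : ℝ → ℝ} {c : ℝ}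

theorem integral_Ioi_pos (hpos : ∀ x ∈ Ioi c, 0 < f x) (hint : IntegrableOn f (Ioi c)) {a : ℝ}
    (ha : c ≤ a) : 0 < ∫ u in Ioi a, f u :=
  setIntegral_pos_of_forall_pos measurableSet_Ioi (by simp) (hint.mono_set (Ioi_subset_Ioi ha))
    fun x hx => hpos x (ha.trans_lt hx)

theorem hazardRate_pos (hpos : ∀ x ∈ Ioi c, 0 < f x) (hint : IntegrableOn f (Ioi c)) {a : ℝ}
    (ha : a ∈ Ioi c) : 0 < hazardRate f a :=
  div_pos (hpos a ha) (integral_Ioi_pos hpos hint (le_of_lt ha))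

theorem continuousOn_hazardRate (hpos : ∀ x ∈ Ioi c, 0 < f x) (hint : IntegrableOn f (Ioi c))
    (hcont : ContinuousOn f (Ioi c)) : ContinuousOn (hazardRate f) (Ioi c) :=
  hcont.div (hint.continuousOn_Ici_primitive_Ioi.mono Ioi_subset_Ici_self) fun _ ha =>
    (integral_Ioi_pos hpos hint (le_of_lt ha)).ne'

theorem monotoneOn_hazardRate (hf : LogConcaveOn (Ioi c) f) (hint : IntegrableOn f (Ioi c)) :
    MonotoneOn (hazardRate f) (Ioi c) := by
  intro a ha b hb hab
  have htail_int {x : ℝ} (hx : x ∈ Ioi c) : IntegrableOn (fun t => f (x + t)) (Ioi 0) :=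
    (integrableOn_Ioi_comp_add_left_iff f x).2 (hint.mono_set (Ioi_subset_Ioi (le_of_lt hx)))
  unfold hazardRate
  rw [div_le_div_iff₀ (integral_Ioi_pos hf.pos hint (le_of_lt ha))
    (integral_Ioi_pos hf.pos hint (le_of_lt hb))]
  calc f a * ∫ u in Ioi b, f u = ∫ t in Ioi 0, f a * f (b + t) := by
        rw [integral_const_mul, integral_Ioi_comp_add_left]
    _ ≤ ∫ t in Ioi 0, f b * f (a + t) := by
        refine setIntegral_mono_on ((htail_int hb).const_mul _) ((htail_int ha).const_mul _)
          measurableSet_Ioi fun t (ht : 0 < t) => ?_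
        rw [mul_comm (f b)]
        exact hf.mul_add_le_add_mul ha (lt_add_of_lt_of_pos hb ht) hab ht.le
    _ = f b * ∫ u in Ioi a, f u := by
        rw [integral_const_mul, integral_Ioi_comp_add_left]

end HazardRate

theorem stmt19_general {f : ℝ → ℝ} (hf : LogConcaveOn (Ioi 0) f) (hint : IntegrableOn f (Ioi 0)) :
    StrictMonoOn (fun a => a * f a / ∫ u in Ioi a, f u) (Ioi 0) ∧
      ∀ β : ℝ, 0 < β → ∃! a : ℝ, a ∈ Ioi 0 ∧ 2 * ∫ u in Ioi a, f u = β * (a * f a) := by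
  have hrate_pos : ∀ a ∈ Ioi 0, 0 < hazardRate f a := fun a => hazardRate_pos hf.pos hint
  have hrate_mono := monotoneOn_hazardRate hf hint
  have hrate_cont := continuousOn_hazardRate hf.pos hint (hf.continuousOn isOpen_Ioi)
  simp only [mul_div_assoc]
  refine ⟨strictMonoOn_id_mul hrate_pos hrate_mono, fun β hβ => ?_⟩
  have hbij := bijOn_id_mul hrate_pos hrate_mono hrate_cont
  have heq_iff {a : ℝ} (ha : a ∈ Ioi 0) :
      2 * ∫ u in Ioi a, f u = β * (a * f a) ↔ a * hazardRate f a = 2 / β := by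
    rw [hazardRate, ← mul_div_assoc, div_eq_div_iff (integral_Ioi_pos hf.pos hint (le_of_lt ha)).ne'
      hβ.ne', mul_comm β, eq_comm]
  obtain ⟨a, ha, haβ⟩ := hbij.surjOn (show 2 / β ∈ Ioi 0 from div_pos two_pos hβ)
  exact ⟨a, ⟨ha, (heq_iff ha).2 haβ⟩, fun b hb =>
    hbij.injOn hb.1 ha (((heq_iff hb.1).1 hb.2).trans haβ.symm)⟩

theorem stdGaussPDF_eq_gaussianPDFReal : stdGaussPDF = ProbabilityTheory.gaussianPDFReal 0 1 := by
  ext a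
  simp [stdGaussPDF, ProbabilityTheory.gaussianPDFReal, div_eq_inv_mul]

theorem stdGaussPDF_pos (a : ℝ) : 0 < stdGaussPDF a := by
  unfold stdGaussPDF
  positivity

theorem integrable_stdGaussPDF : Integrable stdGaussPDF :=
  stdGaussPDF_eq_gaussianPDFReal ▸ ProbabilityTheory.integrable_gaussianPDFReal 0 1

theorem stdGaussPDF_neg (a : ℝ) : stdGaussPDF (-a) = stdGaussPDF a := by
  simp only [stdGaussPDF, neg_sq]

theorem log_stdGaussPDF (a : ℝ) : log (stdGaussPDF a) = -a ^ 2 / 2 - log √(2 * π) := by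
  rw [stdGaussPDF, log_div (exp_ne_zero _) (by positivity), log_exp]

theorem logConcaveOn_stdGaussPDF : LogConcaveOn univ stdGaussPDF where
  pos a _ := stdGaussPDF_pos a
  concaveOn_log := by
    have hsq : ConcaveOn ℝ univ fun a : ℝ => -((1 / 2 : ℝ) • a ^ 2) :=
      (even_two.convexOn_pow.smul one_half_pos.le).neg
    refine (hsq.add_const (-log √(2 * π))).congr fun a _ => ?_
    simp only [log_stdGaussPDF, Pi.add_apply, smul_eq_mul]
    ring

theorem stdGaussCDF_neg (a : ℝ) : stdGaussCDF (-a) = ∫ u in Ioi a, stdGaussPDF u := by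
  simpa only [stdGaussCDF, stdGaussPDF_neg, neg_neg] using integral_comp_neg_Iic (-a) stdGaussPDF

/-- The function `a ↦ a φ(a) / Φ(-a)` is strictly increasing on `(0, ∞)`; consequently, for
every `β > 0` the equation `2 Φ(-a) = β a φ(a)` has exactly one solution `a ∈ (0, ∞)`. -/
theorem stmt19 :
    StrictMonoOn (fun a => a * stdGaussPDF a / stdGaussCDF (-a)) (Set.Ioi (0 : ℝ))
    ∧ ∀ β : ℝ, 0 < β →
        ∃! a : ℝ, a ∈ Set.Ioi (0 : ℝ) ∧ 2 * stdGaussCDF (-a) = β * (a * stdGaussPDF a) := by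
  simpa only [stdGaussCDF_neg] using stmt19_general
    (logConcaveOn_stdGaussPDF.subset (subset_univ _) (convex_Ioi 0))
    integrable_stdGaussPDF.integrableOn
end
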